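/- arXiv:2208.07154 — 2 statements merged into one kernel-verified Lean document; each statement's English description precedes it below -/
import Mathlib

section
/- With θ = 0.8234, for every n ∈ ℕ, every function f : W → ℂ of bounded variation, and every w ∈ W one has |U^n f(w) − ∫_W f dQ∞| ≤ θ^n · var f. -/
open Real MeasureTheory Filter Set
open scoped ENNReal NNReal Classical

namespace OCF

/-- The golden ratio `G = (1+√5)/2`. -/
noncomputable def G : ℝ := (1 + Real.sqrt 5) / 2

/-- `g = (√5-1)/2`. -/
noncomputable def gg : ℝ := (Real.sqrt 5 - 1) / 2

/-- The map `u : W × X → W` of the RSCC; `uF w e i = u(w,(e,i))`. -/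
noncomputable def uF (w : ℝ) (e i : ℤ) : ℝ :=
  if e = 1 then 1 / (i + w)
  else if w < gg ^ 2 then 1 / (i - w) else 1 / (i - gg ^ 2)

/-- The probabilities `P : W × X → [0,∞)` of the RSCC; `PF w e i = P(w,(e,i))`. -/
noncomputable def PF (w : ℝ) (e i : ℤ) : ℝ :=
  if w < gg ^ 2 then
    (1 - w ^ 2) * (2 - (if i = 1 then 1 else 0)) /
      (2 * ((i : ℝ) - 1 + (if i = 1 then 1 else 0) + (e : ℝ) * w) * ((i : ℝ) + 1 + (e : ℝ) * w))
  else
    (1 + w) * (2 - (if i = 1 then 1 else 0)) * (if e = 1 then 1 else 0) /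
      (((i : ℝ) - 1 + (if i = 1 then 1 else 0) + w) * ((i : ℝ) + 1 + w))

/-- The transition probability function
`Q(w,B) = Σ_{(e,i) ∈ X : u(w,(e,i)) ∈ B} P(w,(e,i))`, where odd `i` is written as `2m+1`. -/
noncomputable def Qf (w : ℝ) (B : Set ℝ) : ℝ :=
  ∑' m : ℕ, ((if uF w 1 (2 * (m : ℤ) + 1) ∈ B then PF w 1 (2 * (m : ℤ) + 1) else 0)
           + (if uF w (-1) (2 * (m : ℤ) + 1) ∈ B then PF w (-1) (2 * (m : ℤ) + 1) else 0))

/-- The stationary probability measure `Q∞` on `W = [0,G]`. -/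
noncomputable def Qinf : Measure ℝ :=
  (volume.restrict (Set.Icc (0 : ℝ) G)).withDensity
    (fun w => ENNReal.ofReal ((3 * Real.log G)⁻¹ *
      (if w < gg ^ 2 then 1 / (1 + w) + 1 / (1 - w) else 1 / (1 + w))))

/-- The transition operator `U` of the Markov chain: `Uf(w) = Σ_{(e,i)} P(w,(e,i)) f(u(w,(e,i)))`. -/
noncomputable def U (f : ℝ → ℂ) : ℝ → ℂ := fun w =>
  ∑' m : ℕ, ((PF w 1 (2 * (m : ℤ) + 1) : ℂ) * f (uF w 1 (2 * (m : ℤ) + 1))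
           + (PF w (-1) (2 * (m : ℤ) + 1) : ℂ) * f (uF w (-1) (2 * (m : ℤ) + 1)))

/-- The `n`-step transition probability, as a measure-valued kernel: `Qiter 1 w = Q(w,·)` and
`Qiter (n+1) w B = ∫_W Qiter n w' B Q(w,dw')` (the transition measure `Q(w,·)` being purely
atomic with atom `u(w,(e,i))` of mass `P(w,(e,i))`). -/
noncomputable def Qiter : ℕ → ℝ → Measure ℝ
  | 0 => fun w => Measure.dirac w
  | n + 1 => fun w => Measure.sum (fun m : ℕ =>
      ENNReal.ofReal (PF w 1 (2 * (m : ℤ) + 1)) • Qiter n (uF w 1 (2 * (m : ℤ) + 1)) +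
      ENNReal.ofReal (PF w (-1) (2 * (m : ℤ) + 1)) • Qiter n (uF w (-1) (2 * (m : ℤ) + 1)))

end OCF

open OCF

/-!
The chain moves in two steps: a sign `e` is drawn first, and the signed state `s = e * w` then
determines the law of the odd digit. If `f` is monotone, Abel summation shows that the signed
operator `K f s = ∑ m, digitProb m s • f (branch m s)` is antitone in `s`; hence `U f`, which is
`(1 - w) / 2 * K f w + (1 + w) / 2 * K f (-w)` on `[0, gg ^ 2)` and `K f w` on `[gg ^ 2, G]`, is a
difference of explicit monotone functions on each of the two intervals. The sign rule changes at
`gg ^ 2`, so `U f` acquires a jump there, and because of it the variation itself contracts in one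
step only by a factor slightly worse than `0.8234`. Counting that jump with weight `0.4` restores
the rate: for a function with weighted variation at most `M`, both the weighted variation and the
oscillation of its image are at most `0.8234 * M`.

The measure `Q∞` is the fold of `ds / (1 + s)` on `[-gg ^ 2, G]` along `s ↦ |s|` where both signs
are possible; since the branches map `(-gg ^ 2, G]` onto disjoint sets filling `(0, G)`, `Q∞` is
invariant, and `U^n f w - ∫ f` is at most the oscillation of `U^n f`. Functions with values in a
Banach space reduce to real ones by Hahn–Banach.
-/

namespace OCF

/-- The state space `W = [0, G]`. -/
abbrev W : Set ℝ := Icc 0 G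

/-- The range of the signed state `s = e * w`: the two signs `e = ±1` are both possible exactly
when `w < gg ^ 2`, so `s` runs through `[-gg ^ 2, G]`. -/
abbrev signedW : Set ℝ := Icc (-gg ^ 2) G

/-- The probability of the odd digit `2 * m + 1` given the signed state `s`. -/
noncomputable def digitProb (m : ℕ) (s : ℝ) : ℝ :=
  if m = 0 then 1 / (2 + s) else 2 * (1 + s) / ((2 * m + s) * (2 * m + 2 + s))

/-- The new state when the signed state is `s` and the digit is `2 * m + 1`. -/
noncomputable def branch (m : ℕ) (s : ℝ) : ℝ := 1 / (2 * m + 1 + s)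

/-- The transition operator in terms of the signed state. -/
noncomputable def signedTransition {E : Type*} [NormedAddCommGroup E] [NormedSpace ℝ E]
    (f : ℝ → E) (s : ℝ) : E :=
  ∑' m : ℕ, digitProb m s • f (branch m s)

/-- The transition operator `U` for functions with values in an arbitrary normed space: the sign is
drawn first, `e = ±1` having probability `(1 - e * w) / 2` when `w < gg ^ 2`. -/
noncomputable def transition {E : Type*} [NormedAddCommGroup E] [NormedSpace ℝ E]
    (f : ℝ → E) (w : ℝ) : E :=
  if w < gg ^ 2 then
    ((1 - w) / 2) • signedTransition f w + ((1 + w) / 2) • signedTransition f (-w)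
  else signedTransition f w

/-! ### The golden ratio -/

lemma gg_sq : gg ^ 2 = 1 - gg := by
  have := Real.sq_sqrt (show (0 : ℝ) ≤ 5 by norm_num)
  unfold gg
  linarith

lemma G_eq : G = 1 + gg := by unfold G gg; ring

lemma gg_gt : 0.618 < gg := by
  have : (2.236 : ℝ) < √5 := Real.lt_sqrt_of_sq_lt (by norm_num)
  unfold gg
  linarith

lemma gg_lt : gg < 0.6181 := by
  have : √5 < (2.2362 : ℝ) := (Real.sqrt_lt' (by norm_num)).2 (by norm_num)
  unfold gg
  linarith

lemma gg_sq_mem_Icc : gg ^ 2 ∈ Icc 0.3819 0.382 := by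
  constructor <;> linarith [gg_sq, gg_gt, gg_lt]

/-! ### The state spaces -/

lemma neg_mem_signedW {w : ℝ} (hw : w ∈ W) (h : w ≤ gg ^ 2) : -w ∈ signedW :=
  ⟨neg_le_neg h, by linarith [hw.1, hw.1.trans hw.2]⟩

lemma W_subset_signedW : W ⊆ signedW := Icc_subset_Icc_left (neg_nonpos.2 (sq_nonneg gg))

lemma gg_sq_mem_W : gg ^ 2 ∈ W := ⟨sq_nonneg gg, by linarith [gg_sq, G_eq, gg_gt]⟩

lemma zero_mem_W : (0 : ℝ) ∈ W := ⟨le_rfl, gg_sq_mem_W.1.trans gg_sq_mem_W.2⟩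

lemma G_mem_W : G ∈ W := ⟨zero_mem_W.2, le_rfl⟩

lemma neg_gg_sq_mem_signedW : -gg ^ 2 ∈ signedW := neg_mem_signedW gg_sq_mem_W le_rfl

lemma Icc_zero_gg_sq_subset_W : Icc 0 (gg ^ 2) ⊆ W := Icc_subset_Icc_right gg_sq_mem_W.2

lemma neg_one_lt_of_mem_signedW {s : ℝ} (hs : s ∈ signedW) : -1 < s := by
  have := gg_sq
  have := gg_gt
  linarith [hs.1]

/-! ### The digit distribution -/

lemma digitProb_zero (s : ℝ) : digitProb 0 s = 1 / (2 + s) := if_pos rfl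

lemma digitProb_succ (m : ℕ) (s : ℝ) :
    digitProb (m + 1) s = 2 * (1 + s) / ((2 * m + 2 + s) * (2 * m + 4 + s)) := by
  simp only [digitProb, Nat.succ_ne_zero, if_false, Nat.cast_succ]
  ring_nf

lemma digitProb_nonneg {s : ℝ} (hs : -1 < s) (m : ℕ) : 0 ≤ digitProb m s := by
  have h : 0 < 1 + s := by linarith
  cases m with
  | zero => rw [digitProb_zero]; exact one_div_nonneg.2 (by linarith)
  | succ m =>
    rw [digitProb_succ, show 2 * (m : ℝ) + 2 + s = 2 * m + 1 + (1 + s) by ring,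
      show 2 * (m : ℝ) + 4 + s = 2 * m + 3 + (1 + s) by ring]
    positivity

lemma sum_range_digitProb {s : ℝ} (hs : -1 < s) (N : ℕ) :
    ∑ m ∈ Finset.range (N + 1), digitProb m s = (2 * N + 1) / (2 * N + 2 + s) := by
  induction N with
  | zero => simp [digitProb_zero]
  | succ N ih =>
    have h₂ : 2 * (N : ℝ) + 2 + s ≠ 0 := by linarith
    have h₄ : 2 * (N : ℝ) + 4 + s ≠ 0 := by linarith
    rw [Finset.sum_range_succ, ih, digitProb_succ, Nat.cast_succ,
      show 2 * ((N : ℝ) + 1) + 2 + s = 2 * N + 4 + s by ring,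
      div_add_div _ _ h₂ (mul_ne_zero h₂ h₄),
      div_eq_div_iff (mul_ne_zero h₂ (mul_ne_zero h₂ h₄)) h₄]
    ring

lemma hasSum_digitProb {s : ℝ} (hs : -1 < s) : HasSum (digitProb · s) 1 := by
  rw [hasSum_iff_tendsto_nat_of_nonneg (digitProb_nonneg hs),
    ← tendsto_add_atTop_iff_nat 1]
  have hN : Tendsto (fun N : ℕ => 2 * (N : ℝ) + (2 + s)) atTop atTop :=
    tendsto_atTop_add_const_right _ _ (tendsto_natCast_atTop_atTop.const_mul_atTop two_pos)
  have hlim := (hN.const_div_atTop (1 + s)).const_sub 1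
  rw [sub_zero] at hlim
  refine hlim.congr fun N => ?_
  have h₂ : 2 * (N : ℝ) + (2 + s) ≠ 0 := by linarith
  rw [sum_range_digitProb hs, add_assoc (2 * (N : ℝ)) 2 s]
  field_simp
  ring

/-! ### The branches -/

lemma branch_denom_pos {s : ℝ} (hs : -1 < s) (m : ℕ) : 0 < 2 * (m : ℝ) + 1 + s := by
  have : (0 : ℝ) ≤ m := m.cast_nonneg
  linarith

lemma branch_antitone {s : ℝ} (hs : -1 < s) : Antitone (branch · s) := fun m n hmn =>
  one_div_le_one_div_of_le (branch_denom_pos hs m) (by gcongr)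

lemma branch_antitoneOn (m : ℕ) : AntitoneOn (branch m) (Ioi (-1)) := fun _ hs _ _ hst =>
  one_div_le_one_div_of_le (branch_denom_pos hs m) (by gcongr)

lemma branch_zero_neg_gg_sq : branch 0 (-gg ^ 2) = G := by
  have h := gg_sq
  have := gg_gt
  rw [branch, G_eq, Nat.cast_zero, div_eq_iff (by nlinarith)]
  nlinarith

lemma branch_G (m : ℕ) : branch m G = branch (m + 1) (-gg ^ 2) := by
  rw [branch, branch, G_eq, gg_sq, Nat.cast_succ]
  ring_nf

lemma branch_one_neg_gg_sq : branch 1 (-gg ^ 2) = gg ^ 2 := by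
  have h := gg_sq
  have := gg_gt
  rw [branch, h, Nat.cast_one, div_eq_iff (by linarith)]
  nlinarith

lemma branch_mem_W {s : ℝ} (hs : s ∈ signedW) (m : ℕ) : branch m s ∈ W := by
  have h := neg_one_lt_of_mem_signedW hs
  refine ⟨(one_div_pos.2 (branch_denom_pos h m)).le, ?_⟩
  calc branch m s ≤ branch 0 s := branch_antitone h m.zero_le
    _ ≤ branch 0 (-gg ^ 2) := branch_antitoneOn 0
        (neg_one_lt_of_mem_signedW ⟨le_rfl, hs.1.trans hs.2⟩) h hs.1
    _ = G := branch_zero_neg_gg_sq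

/-- For `s = -gg ^ 2` the digit `3` leads exactly to the endpoint `gg ^ 2`. -/
lemma branch_lt_gg_sq_iff {s : ℝ} (hs : s ∈ Ioc (-gg ^ 2) G) (m : ℕ) :
    branch m s < gg ^ 2 ↔ m ≠ 0 := by
  have h := neg_one_lt_of_mem_signedW (Ioc_subset_Icc_self hs)
  constructor
  · rintro hlt rfl
    refine hlt.not_ge ?_
    calc gg ^ 2 = branch 0 G := by rw [branch_G, branch_one_neg_gg_sq]
      _ ≤ branch 0 s := branch_antitoneOn 0 h (h.trans_le hs.2) hs.2
  · intro hm
    calc branch m s ≤ branch 1 s := branch_antitone h (Nat.one_le_iff_ne_zero.2 hm)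
      _ < branch 1 (-gg ^ 2) := one_div_lt_one_div_of_lt
          (branch_denom_pos (neg_one_lt_of_mem_signedW ⟨le_rfl, hs.1.le.trans hs.2⟩) 1)
          (by linarith [hs.1])
      _ = gg ^ 2 := branch_one_neg_gg_sq

lemma hasDerivAt_branch {s : ℝ} (hs : -1 < s) (m : ℕ) :
    HasDerivAt (branch m) (-1 / (2 * m + 1 + s) ^ 2) s := by
  have h := ((hasDerivAt_id s).const_add (2 * (m : ℝ) + 1)).inv (branch_denom_pos hs m).ne'
  simp only [id] at h
  refine h.congr_of_eventuallyEq (.of_forall fun t => ?_)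
  simp [branch]

/-! ### Linearity and continuity of the transition operator -/

section Operator

variable {E : Type*} [NormedAddCommGroup E] [NormedSpace ℝ E] {f g : ℝ → E} {s w C : ℝ}

lemma signedTransition_congr (hfg : EqOn f g W) (hs : s ∈ signedW) :
    signedTransition f s = signedTransition g s :=
  tsum_congr fun m => by rw [hfg (branch_mem_W hs m)]

lemma norm_signedTransition_le (hf : ∀ w ∈ W, ‖f w‖ ≤ C) (hs : s ∈ signedW) :
    ‖signedTransition f s‖ ≤ C := by
  have h := neg_one_lt_of_mem_signedW hs
  have hsum := (hasSum_digitProb h).mul_right C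
  rw [one_mul] at hsum
  refine tsum_of_norm_bounded hsum fun m => ?_
  rw [norm_smul, Real.norm_of_nonneg (digitProb_nonneg h m)]
  exact mul_le_mul_of_nonneg_left (hf _ (branch_mem_W hs m)) (digitProb_nonneg h m)

lemma transition_of_lt (h : w < gg ^ 2) :
    transition f w =
      ((1 - w) / 2) • signedTransition f w + ((1 + w) / 2) • signedTransition f (-w) :=
  if_pos h

lemma transition_of_ge (h : gg ^ 2 ≤ w) : transition f w = signedTransition f w :=
  if_neg h.not_gt

lemma transition_congr (hfg : EqOn f g W) (hw : w ∈ W) : transition f w = transition g w := by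
  have hs := signedTransition_congr hfg (W_subset_signedW hw)
  rcases lt_or_ge w (gg ^ 2) with h | h
  · rw [transition_of_lt h, transition_of_lt h, hs,
      signedTransition_congr hfg (neg_mem_signedW hw h.le)]
  · rw [transition_of_ge h, transition_of_ge h, hs]

lemma norm_transition_le (hf : ∀ w ∈ W, ‖f w‖ ≤ C) (hw : w ∈ W) : ‖transition f w‖ ≤ C := by
  have hs := norm_signedTransition_le hf (W_subset_signedW hw)
  rcases lt_or_ge w (gg ^ 2) with h | h
  · have hs' := norm_signedTransition_le hf (neg_mem_signedW hw h.le)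
    have h₁ : 0 ≤ (1 - w) / 2 := by linarith [gg_sq, gg_gt]
    have h₂ : 0 ≤ (1 + w) / 2 := by linarith [hw.1]
    rw [transition_of_lt h]
    calc _ ≤ ‖((1 - w) / 2) • signedTransition f w‖ + ‖((1 + w) / 2) • signedTransition f (-w)‖ :=
          norm_add_le _ _
      _ ≤ (1 - w) / 2 * C + (1 + w) / 2 * C := by
          rw [norm_smul, norm_smul, Real.norm_of_nonneg h₁, Real.norm_of_nonneg h₂]
          gcongr
      _ = C := by ring
  · rwa [transition_of_ge h]

lemma isBounded_iterate_transition (hf : Bornology.IsBounded (f '' W)) (n : ℕ) :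
    Bornology.IsBounded (transition^[n] f '' W) := by
  obtain ⟨C, hC⟩ := isBounded_iff_forall_norm_le.1 hf
  refine isBounded_iff_forall_norm_le.2 ⟨C, ?_⟩
  rw [forall_mem_image]
  induction n with
  | zero => exact fun w hw => hC _ (mem_image_of_mem f hw)
  | succ n ih =>
    intro w hw
    rw [Function.iterate_succ_apply']
    exact norm_transition_le ih hw

variable [CompleteSpace E] {F : Type*} [NormedAddCommGroup F] [NormedSpace ℝ F]

lemma summable_digitProb_smul (hs : s ∈ signedW) (hf : Bornology.IsBounded (f '' W)) :
    Summable fun m => digitProb m s • f (branch m s) := by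
  have h := neg_one_lt_of_mem_signedW hs
  obtain ⟨C, hC⟩ := isBounded_iff_forall_norm_le.1 hf
  refine ((hasSum_digitProb h).summable.mul_right C).of_norm_bounded fun m => ?_
  rw [norm_smul, Real.norm_of_nonneg (digitProb_nonneg h m)]
  exact mul_le_mul_of_nonneg_left (hC _ (mem_image_of_mem f (branch_mem_W hs m)))
    (digitProb_nonneg h m)

lemma signedTransition_add_smul (hf : Bornology.IsBounded (f '' W))
    (hg : Bornology.IsBounded (g '' W)) (c : ℝ) (hs : s ∈ signedW) :
    signedTransition (f + c • g) s = signedTransition f s + c • signedTransition g s := by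
  simp only [signedTransition, Pi.add_apply, Pi.smul_apply, smul_add, smul_comm _ c]
  rw [(summable_digitProb_smul hs hf).tsum_add ((summable_digitProb_smul hs hg).const_smul c),
    (summable_digitProb_smul hs hg).tsum_const_smul]

lemma map_signedTransition (L : E →L[ℝ] F) (hf : Bornology.IsBounded (f '' W))
    (hs : s ∈ signedW) : L (signedTransition f s) = signedTransition (L ∘ f) s := by
  simp only [signedTransition, L.map_tsum (summable_digitProb_smul hs hf), map_smul,
    Function.comp_apply]

lemma transition_add_smul (hf : Bornology.IsBounded (f '' W)) (hg : Bornology.IsBounded (g '' W))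
    (c : ℝ) (hw : w ∈ W) :
    transition (f + c • g) w = transition f w + c • transition g w := by
  have hs := signedTransition_add_smul hf hg c (W_subset_signedW hw)
  rcases lt_or_ge w (gg ^ 2) with h | h
  · rw [transition_of_lt h, transition_of_lt h, transition_of_lt h, hs,
      signedTransition_add_smul hf hg c (neg_mem_signedW hw h.le)]
    module
  · rw [transition_of_ge h, transition_of_ge h, transition_of_ge h, hs]

lemma map_transition (L : E →L[ℝ] F) (hf : Bornology.IsBounded (f '' W)) (hw : w ∈ W) :
    L (transition f w) = transition (L ∘ f) w := by
  have hs := map_signedTransition L hf (W_subset_signedW hw)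
  rcases lt_or_ge w (gg ^ 2) with h | h
  · rw [transition_of_lt h, transition_of_lt h, map_add, map_smul, map_smul, hs,
      map_signedTransition L hf (neg_mem_signedW hw h.le)]
  · rw [transition_of_ge h, transition_of_ge h, hs]

lemma map_iterate_transition (L : E →L[ℝ] F) (hf : Bornology.IsBounded (f '' W)) (n : ℕ) :
    EqOn (L ∘ transition^[n] f) (transition^[n] (L ∘ f)) W := by
  induction n with
  | zero => exact fun _ _ => rfl
  | succ n ih =>
    intro w hw
    rw [Function.iterate_succ', Function.iterate_succ', Function.comp_apply, Function.comp_apply,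
      Function.comp_apply, map_transition L (isBounded_iterate_transition hf n) hw,
      transition_congr ih hw]

end Operator

/-! ### Monotone functions -/

section Monotone

lemma hasSum_mul_le_of_sum_range_le {d F : ℕ → ℝ} {b S : ℝ}
    (hd : ∀ N, ∑ m ∈ Finset.range (N + 1), d m ≤ b) (hF : Antitone F) (hF₀ : ∀ m, 0 ≤ F m)
    (hS : HasSum (fun m => d m * F m) S) : S ≤ b * F 0 := by
  have habel (N : ℕ) : ∑ m ∈ Finset.range (N + 1), d m * F m ≤
      (∑ m ∈ Finset.range (N + 1), d m) * F N + b * (F 0 - F N) := by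
    induction N with
    | zero => simp
    | succ N ih =>
      rw [Finset.sum_range_succ, Finset.sum_range_succ d (N + 1)]
      have := mul_nonneg (sub_nonneg.2 (hd N)) (sub_nonneg.2 (hF N.le_succ))
      linarith
  refine le_of_tendsto ((tendsto_add_atTop_iff_nat 1).2 hS.tendsto_sum_nat) (.of_forall fun N => ?_)
  linarith [habel N, mul_le_mul_of_nonneg_right (hd N) (hF₀ N)]

variable {f : ℝ → ℝ} (hf : MonotoneOn f W) {s t : ℝ}
include hf

lemma isBounded_image_of_monotoneOn : Bornology.IsBounded (f '' W) :=
  (Metric.isBounded_Icc (f 0) (f G)).subset hf.image_Icc_subset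

lemma monotoneOn_nonneg_sub (hs : s ∈ signedW) (m : ℕ) : 0 ≤ f (branch m s) - f 0 :=
  sub_nonneg.2 (hf zero_mem_W (branch_mem_W hs m) (branch_mem_W hs m).1)

lemma antitone_comp_branch (hs : s ∈ signedW) : Antitone fun m => f (branch m s) - f 0 :=
  fun m n hmn => sub_le_sub_right (hf (branch_mem_W hs n) (branch_mem_W hs m)
    (branch_antitone (neg_one_lt_of_mem_signedW hs) hmn)) _

lemma hasSum_signedTransition_sub (hs : s ∈ signedW) :
    HasSum (fun m => digitProb m s * (f (branch m s) - f 0)) (signedTransition f s - f 0) := by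
  have h := ((summable_digitProb_smul hs (isBounded_image_of_monotoneOn hf)).hasSum).sub
    ((hasSum_digitProb (neg_one_lt_of_mem_signedW hs)).mul_right (f 0))
  simpa only [signedTransition, smul_eq_mul, one_mul, ← mul_sub] using h

lemma exists_hasSum_ge_signedTransition_sub (hs : s ∈ signedW) (ht : t ∈ signedW) (hst : s ≤ t) :
    ∃ S, HasSum (fun m => digitProb m t * (f (branch m s) - f 0)) S ∧
      signedTransition f t - f 0 ≤ S := by
  have ht' := neg_one_lt_of_mem_signedW ht
  have hsummable : Summable fun m => digitProb m t * (f (branch m s) - f 0) :=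
    ((hasSum_digitProb ht').summable.mul_right (f (branch 0 s) - f 0)).of_nonneg_of_le
      (fun m => mul_nonneg (digitProb_nonneg ht' m) (monotoneOn_nonneg_sub hf hs m))
      fun m => mul_le_mul_of_nonneg_left (antitone_comp_branch hf hs m.zero_le)
        (digitProb_nonneg ht' m)
  refine ⟨_, hsummable.hasSum, hasSum_le (fun m => ?_) (hasSum_signedTransition_sub hf ht)
    hsummable.hasSum⟩
  exact mul_le_mul_of_nonneg_left (sub_le_sub_right (hf (branch_mem_W ht m) (branch_mem_W hs m)
    (branch_antitoneOn m (neg_one_lt_of_mem_signedW hs) ht' hst)) _) (digitProb_nonneg ht' m)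

lemma antitoneOn_signedTransition : AntitoneOn (signedTransition f) signedW := by
  intro s hs t ht hst
  obtain ⟨S, hS, hle⟩ := exists_hasSum_ge_signedTransition_sub hf hs ht hst
  have hs' := neg_one_lt_of_mem_signedW hs
  have hdiff := hS.sub (hasSum_signedTransition_sub hf hs)
  simp only [← sub_mul] at hdiff
  have hnonpos := hasSum_mul_le_of_sum_range_le (b := 0) (fun N => ?_)
    (antitone_comp_branch hf hs) (monotoneOn_nonneg_sub hf hs) hdiff
  · linarith
  · have : (0 : ℝ) ≤ N := N.cast_nonneg
    rw [Finset.sum_sub_distrib, sum_range_digitProb (hs'.trans_le hst), sum_range_digitProb hs',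
      sub_nonpos]
    exact div_le_div_of_nonneg_left (by positivity) (by linarith) (by linarith)

/-- All three values are expanded along the branch points of `-gg ^ 2`, those of `G` being the same
points shifted by one. -/
lemma signedTransition_sub_le {x y b : ℝ} (hy : 0 ≤ y)
    (h₀ : x / (2 - gg ^ 2) + y / (2 + gg ^ 2) ≤ b)
    (hb : ∀ N : ℕ, x * (2 * N + 3) / (2 * N + 4 - gg ^ 2) + y * (2 * N + 3) / (2 * N + 4 + gg ^ 2) -
      (2 * N + 1) / (2 * N + 4 - gg ^ 2) ≤ b) :
    x * (signedTransition f (-gg ^ 2) - f 0) + y * (signedTransition f (gg ^ 2) - f 0) -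
      (signedTransition f G - f 0) ≤ b * (f G - f 0) := by
  have hq := neg_gg_sq_mem_signedW
  have hq' := W_subset_signedW gg_sq_mem_W
  have hG := W_subset_signedW G_mem_W
  obtain ⟨S, hS, hle⟩ := exists_hasSum_ge_signedTransition_sub hf hq hq' (hq.1.trans hq'.1)
  set F : ℕ → ℝ := fun m => f (branch m (-gg ^ 2)) - f 0
  let e : ℕ → ℝ := fun m => if m = 0 then 0 else digitProb (m - 1) G
  have he : HasSum (fun m => e m * F m) (signedTransition f G - f 0) := by
    rw [← hasSum_nat_add_iff' 1]
    simpa [e, F, branch_G] using hasSum_signedTransition_sub hf hG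
  have hsum := (((hasSum_signedTransition_sub hf hq).mul_left x).add (hS.mul_left y)).sub he
  simp only [← mul_assoc, ← add_mul, F, ← sub_mul] at hsum
  have hpartial (N : ℕ) : ∑ m ∈ Finset.range (N + 1),
      (x * digitProb m (-gg ^ 2) + y * digitProb m (gg ^ 2) - e m) ≤ b := by
    rw [Finset.sum_sub_distrib, Finset.sum_add_distrib, ← Finset.mul_sum, ← Finset.mul_sum,
      sum_range_digitProb (neg_one_lt_of_mem_signedW hq),
      sum_range_digitProb (neg_one_lt_of_mem_signedW hq')]
    cases N with
    | zero => simpa [e, ← sub_eq_add_neg, ← div_eq_mul_inv] using h₀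
    | succ N =>
      rw [Finset.sum_range_succ']
      simp only [e, Nat.succ_ne_zero, if_false, if_true, Nat.add_sub_cancel, add_zero]
      convert hb N using 1
      rw [sum_range_digitProb (neg_one_lt_of_mem_signedW hG), G_eq, gg_sq]
      push_cast
      ring_nf
  have := hasSum_mul_le_of_sum_range_le hpartial (antitone_comp_branch hf hq)
    (monotoneOn_nonneg_sub hf hq) hsum
  rw [branch_zero_neg_gg_sq] at this
  linarith [mul_le_mul_of_nonneg_left hle hy]

end Monotone

/-! ### The weighted variation -/

/-- The unit step at `gg ^ 2`, the point at which `transition` creates discontinuities. -/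
noncomputable def jump : ℝ → ℝ := (Ici (gg ^ 2)).indicator 1

/-- `WeightedVariationLE h M` says that `h` has variation at most `M` on `W` when a jump at
`gg ^ 2` is counted with weight `0.4`: up to a multiple `a` of `jump`, `h` is a difference of
monotone functions of total increase at most `M - 0.4 * |a|`. The operator creates such jumps and
contracts them more than it contracts variation elsewhere; the weight balances the two. -/
def WeightedVariationLE (h : ℝ → ℝ) (M : ℝ) : Prop :=
  ∃ (a : ℝ) (h₁ h₂ : ℝ → ℝ), MonotoneOn h₁ W ∧ MonotoneOn h₂ W ∧
    EqOn h (h₁ - h₂ + a • jump) W ∧ h₁ G - h₁ 0 + (h₂ G - h₂ 0) + 0.4 * |a| ≤ M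

lemma jump_of_lt {w : ℝ} (h : w < gg ^ 2) : jump w = 0 := indicator_of_notMem h.not_ge 1

lemma jump_of_ge {w : ℝ} (h : gg ^ 2 ≤ w) : jump w = 1 := indicator_of_mem h 1

lemma monotone_jump : Monotone jump := by
  intro w w' hww
  rcases lt_or_ge w (gg ^ 2) with h | h
  · rw [jump_of_lt h]
    exact indicator_nonneg (fun _ _ => zero_le_one) w'
  · rw [jump_of_ge h, jump_of_ge (h.trans hww)]

namespace WeightedVariationLE

variable {h k : ℝ → ℝ} {M N : ℝ}

lemma congr (hh : WeightedVariationLE h M) (hk : EqOn k h W) : WeightedVariationLE k M := by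
  obtain ⟨a, h₁, h₂, hm₁, hm₂, heq, hM⟩ := hh
  exact ⟨a, h₁, h₂, hm₁, hm₂, hk.trans heq, hM⟩

lemma mono (hh : WeightedVariationLE h M) (hMN : M ≤ N) : WeightedVariationLE h N := by
  obtain ⟨a, h₁, h₂, hm₁, hm₂, heq, hM⟩ := hh
  exact ⟨a, h₁, h₂, hm₁, hm₂, heq, hM.trans hMN⟩

lemma add (hh : WeightedVariationLE h M) (hk : WeightedVariationLE k N) :
    WeightedVariationLE (h + k) (M + N) := by
  obtain ⟨a, h₁, h₂, hm₁, hm₂, heq, hM⟩ := hh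
  obtain ⟨b, k₁, k₂, hn₁, hn₂, keq, hN⟩ := hk
  refine ⟨a + b, h₁ + k₁, h₂ + k₂, hm₁.add hn₁, hm₂.add hn₂, fun w hw => ?_, ?_⟩
  · rw [Pi.add_apply, heq hw, keq hw]
    simp only [Pi.add_apply, Pi.sub_apply, Pi.smul_apply, smul_eq_mul]
    ring
  · simp only [Pi.add_apply]
    linarith [abs_add_le a b]

lemma neg (hh : WeightedVariationLE h M) : WeightedVariationLE (-h) M := by
  obtain ⟨a, h₁, h₂, hm₁, hm₂, heq, hM⟩ := hh
  refine ⟨-a, h₂, h₁, hm₂, hm₁, fun w hw => ?_, ?_⟩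
  · rw [Pi.neg_apply, heq hw]
    simp only [Pi.add_apply, Pi.sub_apply, Pi.smul_apply, smul_eq_mul]
    ring
  · rw [abs_neg]
    linarith

lemma smul_of_nonneg (hh : WeightedVariationLE h M) {c : ℝ} (hc : 0 ≤ c) :
    WeightedVariationLE (c • h) (c * M) := by
  obtain ⟨a, h₁, h₂, hm₁, hm₂, heq, hM⟩ := hh
  refine ⟨c * a, c • h₁, c • h₂,
    fun w hw w' hw' hww => mul_le_mul_of_nonneg_left (hm₁ hw hw' hww) hc,
    fun w hw w' hw' hww => mul_le_mul_of_nonneg_left (hm₂ hw hw' hww) hc, fun w hw => ?_, ?_⟩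
  · rw [Pi.smul_apply, heq hw]
    simp only [Pi.add_apply, Pi.sub_apply, Pi.smul_apply, smul_eq_mul]
    ring
  · simp only [Pi.smul_apply, smul_eq_mul, abs_mul, abs_of_nonneg hc]
    linarith [mul_le_mul_of_nonneg_left hM hc]

lemma smul (hh : WeightedVariationLE h M) (c : ℝ) : WeightedVariationLE (c • h) (|c| * M) := by
  rcases le_total 0 c with hc | hc
  · rw [abs_of_nonneg hc]
    exact hh.smul_of_nonneg hc
  · rw [abs_of_nonpos hc, ← neg_neg (c • h), ← neg_smul]
    exact (hh.smul_of_nonneg (neg_nonneg.2 hc)).neg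

end WeightedVariationLE

lemma weightedVariationLE_of_piecewise {α β γ h : ℝ → ℝ} (hα : MonotoneOn α (Icc 0 (gg ^ 2)))
    (hβ : MonotoneOn β (Icc 0 (gg ^ 2))) (hγ : AntitoneOn γ (Icc (gg ^ 2) G))
    (hlt : ∀ w ∈ Ico 0 (gg ^ 2), h w = α w - β w) (hge : ∀ w ∈ Icc (gg ^ 2) G, h w = γ w) :
    WeightedVariationLE h (α (gg ^ 2) - α 0 + (β (gg ^ 2) - β 0) +
      0.4 * |γ (gg ^ 2) - α (gg ^ 2) + β (gg ^ 2)| + (γ (gg ^ 2) - γ G)) := by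
  obtain ⟨hq₀, hqG⟩ := gg_sq_mem_W
  have hmin {w : ℝ} (hw : w ∈ W) : min w (gg ^ 2) ∈ Icc 0 (gg ^ 2) :=
    ⟨le_min hw.1 hq₀, min_le_right _ _⟩
  have hmax {w : ℝ} (hw : w ∈ W) : max w (gg ^ 2) ∈ Icc (gg ^ 2) G :=
    ⟨le_max_right _ _, max_le hw.2 hqG⟩
  refine ⟨γ (gg ^ 2) - α (gg ^ 2) + β (gg ^ 2), fun w => α (min w (gg ^ 2)),
    fun w => β (min w (gg ^ 2)) + (γ (gg ^ 2) - γ (max w (gg ^ 2))), ?_, ?_, ?_, ?_⟩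
  · exact fun w hw w' hw' hww => hα (hmin hw) (hmin hw') (min_le_min_right _ hww)
  · exact fun w hw w' hw' hww => add_le_add (hβ (hmin hw) (hmin hw') (min_le_min_right _ hww))
      (sub_le_sub_left (hγ (hmax hw) (hmax hw') (max_le_max_right _ hww)) _)
  · intro w hw
    simp only [Pi.add_apply, Pi.sub_apply, Pi.smul_apply, smul_eq_mul]
    rcases lt_or_ge w (gg ^ 2) with h' | h'
    · rw [hlt w ⟨hw.1, h'⟩, jump_of_lt h', min_eq_left h'.le, max_eq_right h'.le]
      ring
    · rw [hge w ⟨h', hw.2⟩, jump_of_ge h', min_eq_right h', max_eq_left h']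
      ring
  · simp only [min_eq_right hqG, max_eq_left hqG, min_eq_left hq₀, max_eq_right hq₀]
    linarith

/-! ### Contraction of the weighted variation -/

lemma contraction_bound (N : ℕ) :
    0.7 * (1 + gg ^ 2) * (2 * N + 3) / (2 * N + 4 - gg ^ 2) +
      0.3 * (1 + gg ^ 2) * (2 * N + 3) / (2 * N + 4 + gg ^ 2) -
      (2 * N + 1) / (2 * N + 4 - gg ^ 2) ≤ 0.8234 := by
  have hg := gg_gt
  have hg' := gg_lt
  rw [gg_sq]
  have h₁ : 0.7 * (1 + (1 - gg)) * (2 * N + 3) / (2 * N + 4 - (1 - gg)) -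
      (2 * N + 1) / (2 * N + 4 - (1 - gg)) ≤ 1.9023 / (2 * N + 3.618) := by
    have : (0 : ℝ) ≤ N := N.cast_nonneg
    have : 0.7 * (1 + (1 - gg)) * (2 * N + 3) ≤ 0.9674 * (2 * N + 3) := by gcongr; linarith
    rw [← sub_div]
    gcongr <;> linarith
  have h₂ : 0.3 * (1 + (1 - gg)) * (2 * N + 3) / (2 * N + 4 + (1 - gg)) ≤
      0.4146 * (2 * N + 3) / (2 * N + 4.3819) := by
    gcongr ?_ * _ / ?_ <;> linarith
  have h₃ : 1.9023 / (2 * N + 3.618) + 0.4146 * (2 * N + 3) / (2 * N + 4.3819) ≤ (0.8234 : ℝ) := by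
    rw [div_add_div _ _ (by positivity) (by positivity), div_le_iff₀ (by positivity)]
    nlinarith [(N.cast_nonneg : (0 : ℝ) ≤ N)]
  linarith

section Monotone

variable {f : ℝ → ℝ} (hf : MonotoneOn f W)
include hf

lemma signedTransition_variation_le :
    signedTransition f (-gg ^ 2) - signedTransition f G ≤ 0.8234 * (f G - f 0) := by
  have hg := gg_gt
  have hg' := gg_lt
  have h₀ : 1 / (2 - gg ^ 2) + 0 / (2 + gg ^ 2) ≤ 0.8234 := by
    rw [zero_div, add_zero, gg_sq, div_le_iff₀ (by linarith)]
    linarith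
  have h := signedTransition_sub_le hf le_rfl h₀ fun N => ?_
  · linarith
  · rw [one_mul, zero_mul, zero_div, add_zero, ← sub_div, gg_sq, div_le_iff₀ (by linarith)]
    linarith

lemma signedTransition_sub_nonneg {s : ℝ} (hs : s ∈ signedW) : 0 ≤ signedTransition f s - f 0 :=
  (hasSum_signedTransition_sub hf hs).nonneg fun m =>
    mul_nonneg (digitProb_nonneg (neg_one_lt_of_mem_signedW hs) m) (monotoneOn_nonneg_sub hf hs m)

lemma monotoneOn_half_add_mul_signedTransition_neg :
    MonotoneOn (fun w => (1 + w) / 2 * (signedTransition f (-w) - f 0)) (Icc 0 (gg ^ 2)) := by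
  intro w hw w' hw' hww
  have hs := neg_mem_signedW (Icc_zero_gg_sq_subset_W hw) hw.2
  have hs' := neg_mem_signedW (Icc_zero_gg_sq_subset_W hw') hw'.2
  have := antitoneOn_signedTransition hf hs' hs (neg_le_neg hww)
  have := signedTransition_sub_nonneg hf hs
  have := hw'.1
  dsimp only
  gcongr

lemma antitoneOn_half_sub_mul_signedTransition :
    AntitoneOn (fun w => (1 - w) / 2 * (signedTransition f w - f 0)) (Icc 0 (gg ^ 2)) := by
  intro w hw w' hw' hww
  have hs := W_subset_signedW (Icc_zero_gg_sq_subset_W hw)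
  have hs' := W_subset_signedW (Icc_zero_gg_sq_subset_W hw')
  have := antitoneOn_signedTransition hf hs hs' hww
  have := signedTransition_sub_nonneg hf hs'
  have : 0 ≤ 1 - w := by linarith [hw.2, gg_sq, gg_gt]
  dsimp only
  gcongr

lemma weightedVariationLE_transition_of_monotoneOn :
    WeightedVariationLE (transition f) (0.8234 * (f G - f 0)) := by
  have hK := antitoneOn_signedTransition hf
  refine (weightedVariationLE_of_piecewise
    ((monotoneOn_half_add_mul_signedTransition_neg hf).add_const (f 0))
    (antitoneOn_half_sub_mul_signedTransition hf).neg
    (hK.mono ((Icc_subset_Icc_left gg_sq_mem_W.1).trans W_subset_signedW)) (fun w hw => ?_)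
    fun w hw => transition_of_ge hw.1).mono ?_
  · rw [transition_of_lt hw.2, smul_eq_mul, smul_eq_mul]
    ring
  · have hjump :
        (1 + gg ^ 2) / 2 * (signedTransition f (gg ^ 2) - signedTransition f (-gg ^ 2)) ≤ 0 :=
      mul_nonpos_of_nonneg_of_nonpos (by positivity) (sub_nonpos.2 (hK neg_gg_sq_mem_signedW
        (W_subset_signedW gg_sq_mem_W) (W_subset_signedW gg_sq_mem_W).1))
    have h₀ : 0.7 * (1 + gg ^ 2) / (2 - gg ^ 2) + 0.3 * (1 + gg ^ 2) / (2 + gg ^ 2) ≤ 0.8234 := by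
      have hg := gg_gt
      have hg' := gg_lt
      rw [gg_sq, div_add_div _ _ (by linarith) (by linarith),
        div_le_iff₀ (mul_pos (by linarith) (by linarith))]
      nlinarith
    have := signedTransition_sub_le hf (x := 0.7 * (1 + gg ^ 2)) (by positivity) h₀
      contraction_bound
    rw [abs_of_nonpos (by linarith), neg_zero]
    linarith

lemma abs_transition_sub_le_of_monotoneOn {w w' : ℝ} (hw : w ∈ W) (hw' : w' ∈ W) :
    |transition f w - transition f w'| ≤ 0.8234 * (f G - f 0) := by
  have hK := antitoneOn_signedTransition hf
  have hmem {s : ℝ} (hs : s ∈ signedW) :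
      signedTransition f s ∈ Icc (signedTransition f G) (signedTransition f (-gg ^ 2)) :=
    ⟨hK hs (W_subset_signedW G_mem_W) hs.2, hK neg_gg_sq_mem_signedW hs hs.1⟩
  have htransition {w : ℝ} (hw : w ∈ W) :
      transition f w ∈ Icc (signedTransition f G) (signedTransition f (-gg ^ 2)) := by
    have hs := hmem (W_subset_signedW hw)
    rcases lt_or_ge w (gg ^ 2) with h | h
    · rw [transition_of_lt h]
      exact convex_Icc _ _ hs (hmem (neg_mem_signedW hw h.le)) (by linarith [gg_sq, gg_gt])
        (by linarith [hw.1]) (by ring)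
    · rwa [transition_of_ge h]
  exact (Real.dist_le_of_mem_Icc (htransition hw) (htransition hw')).trans
    (signedTransition_variation_le hf)

end Monotone

lemma signedTransition_jump {s : ℝ} (hs : s ∈ Ioc (-gg ^ 2) G) :
    signedTransition jump s = 1 / (2 + s) := by
  rw [signedTransition, tsum_eq_single 0, digitProb_zero,
    jump_of_ge (not_lt.1 (mt (branch_lt_gg_sq_iff hs 0).1 (not_not.2 rfl))), smul_eq_mul, mul_one]
  intro m hm
  rw [jump_of_lt ((branch_lt_gg_sq_iff hs m).2 hm), smul_zero]

lemma transition_jump_of_lt {w : ℝ} (hw : w ∈ Ico 0 (gg ^ 2)) :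
    transition jump w = (2 + w ^ 2) / (4 - w ^ 2) := by
  have hq := gg_sq_mem_W
  have h₁ : 2 + w ≠ 0 := by linarith [hw.1]
  have h₂ : 2 + -w ≠ 0 := by linarith [hw.2, gg_sq, gg_gt]
  rw [transition_of_lt hw.2, signedTransition_jump ⟨by linarith [hw.1, hw.2], hw.2.le.trans hq.2⟩,
    signedTransition_jump ⟨neg_lt_neg hw.2, by linarith [hw.1, hq.1, hq.2]⟩, smul_eq_mul,
    smul_eq_mul, show 4 - w ^ 2 = (2 + w) * (2 + -w) by ring]
  field_simp
  ring

lemma transition_jump_of_ge {w : ℝ} (hw : w ∈ Icc (gg ^ 2) G) :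
    transition jump w = 1 / (2 + w) := by
  rw [transition_of_ge hw.1, signedTransition_jump ⟨by linarith [hw.1, gg_sq, gg_lt], hw.2⟩]

lemma monotoneOn_two_add_sq_div_four_sub_sq :
    MonotoneOn (fun w : ℝ => (2 + w ^ 2) / (4 - w ^ 2)) (Icc 0 (gg ^ 2)) := by
  intro w hw w' hw' hww
  have : w' < 1 := by linarith [hw'.2, gg_sq, gg_gt]
  have : 0 < 4 - w' ^ 2 := by nlinarith [hw'.1]
  have := hw.1
  dsimp only
  gcongr

lemma transition_jump_mem_Icc {w : ℝ} (hw : w ∈ W) : transition jump w ∈ Icc 0.276 0.557 := by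
  have hq := gg_sq_mem_Icc
  have hG := G_eq
  have hg := gg_lt
  rcases lt_or_ge w (gg ^ 2) with h | h
  · have hw₂ : w ^ 2 ≤ 0.382 ^ 2 := pow_le_pow_left₀ hw.1 (h.le.trans hq.2) 2
    rw [transition_jump_of_lt ⟨hw.1, h⟩]
    constructor
    · rw [le_div_iff₀ (by linarith)]
      linarith [sq_nonneg w]
    · rw [div_le_iff₀ (by linarith)]
      linarith
  · rw [transition_jump_of_ge ⟨h, hw.2⟩]
    constructor
    · rw [le_div_iff₀ (by linarith [hw.1])]
      linarith [hw.2]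
    · rw [div_le_iff₀ (by linarith [hw.1])]
      linarith [hq.1]

lemma weightedVariationLE_transition_jump :
    WeightedVariationLE (transition jump) (0.8234 * 0.4) := by
  have hq := gg_sq_mem_Icc
  have hγ : AntitoneOn (fun w : ℝ => 1 / (2 + w)) (Icc (gg ^ 2) G) := fun w hw w' _ hww =>
    one_div_le_one_div_of_le (by linarith [hw.1, hq.1]) (by linarith)
  refine (weightedVariationLE_of_piecewise monotoneOn_two_add_sq_div_four_sub_sq
    (monotoneOn_const (c := (0 : ℝ))) hγ
    (fun w hw => by rw [transition_jump_of_lt hw, sub_zero])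
    fun w hw => transition_jump_of_ge hw).mono ?_
  have hφ : (2 + (gg ^ 2) ^ 2) / (4 - (gg ^ 2) ^ 2) ∈ Icc 0.5 0.557 := by
    have hq₂ : (gg ^ 2) ^ 2 ≤ 0.382 ^ 2 := pow_le_pow_left₀ (sq_nonneg gg) hq.2 2
    refine ⟨(le_div_iff₀ (by linarith)).2 ?_, (div_le_iff₀ (by linarith)).2 (by linarith)⟩
    linarith [sq_nonneg (gg ^ 2)]
  have hγq : 1 / (2 + gg ^ 2) ∈ Icc 0.41 0.42 :=
    ⟨(le_div_iff₀ (by positivity)).2 (by linarith [hq.2]),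
      (div_le_iff₀ (by positivity)).2 (by linarith [hq.1])⟩
  have hγG : 0.276 ≤ 1 / (2 + G) := by
    rw [G_eq, le_div_iff₀ (by linarith [gg_gt])]
    linarith [gg_lt]
  rw [abs_of_nonpos (by linarith [hφ.1, hγq.2])]
  norm_num only at hφ hγq hγG ⊢
  linarith [hφ.1, hφ.2, hγq.1, hγq.2]

lemma isBounded_image_jump : Bornology.IsBounded (jump '' W) :=
  isBounded_image_of_monotoneOn (monotone_jump.monotoneOn W)

lemma transition_sub_add_smul_jump {h₁ h₂ : ℝ → ℝ} (hm₁ : MonotoneOn h₁ W)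
    (hm₂ : MonotoneOn h₂ W) (a : ℝ) :
    EqOn (transition (h₁ - h₂ + a • jump))
      (transition h₁ + (-1 : ℝ) • transition h₂ + a • transition jump) W := by
  intro w hw
  have hb₁ := isBounded_image_of_monotoneOn hm₁
  have hb₂ := isBounded_image_of_monotoneOn hm₂
  have hb : Bornology.IsBounded ((h₁ - h₂) '' W) := (hb₁.sub hb₂).subset <|
    image_subset_iff.2 fun w hw => sub_mem_sub (mem_image_of_mem h₁ hw) (mem_image_of_mem h₂ hw)
  rw [transition_add_smul hb isBounded_image_jump a hw, sub_eq_add_neg, ← neg_one_smul ℝ h₂,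
    transition_add_smul hb₁ hb₂ (-1) hw]
  simp only [Pi.add_apply, Pi.smul_apply]

namespace WeightedVariationLE

variable {h : ℝ → ℝ} {M : ℝ}

lemma transition (hh : WeightedVariationLE h M) :
    WeightedVariationLE (OCF.transition h) (0.8234 * M) := by
  obtain ⟨a, h₁, h₂, hm₁, hm₂, heq, hM⟩ := hh
  refine ((((weightedVariationLE_transition_of_monotoneOn hm₁).add
    ((weightedVariationLE_transition_of_monotoneOn hm₂).smul (-1))).add
    (weightedVariationLE_transition_jump.smul a)).mono ?_).congr fun w hw => ?_
  · rw [abs_neg, abs_one]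
    linarith
  · rw [transition_congr heq hw, transition_sub_add_smul_jump hm₁ hm₂ a hw]

lemma iterate_transition (hh : WeightedVariationLE h M) (n : ℕ) :
    WeightedVariationLE (OCF.transition^[n] h) (0.8234 ^ n * M) := by
  induction n with
  | zero => simpa using hh
  | succ n ih =>
    rw [Function.iterate_succ_apply', pow_succ', mul_assoc]
    exact ih.transition

lemma abs_transition_sub_le (hh : WeightedVariationLE h M) {w w' : ℝ} (hw : w ∈ W)
    (hw' : w' ∈ W) : |OCF.transition h w - OCF.transition h w'| ≤ 0.8234 * M := by
  obtain ⟨a, h₁, h₂, hm₁, hm₂, heq, hM⟩ := hh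
  have hjump : |OCF.transition jump w - OCF.transition jump w'| ≤ 0.8234 * 0.4 :=
    (Real.dist_le_of_mem_Icc (transition_jump_mem_Icc hw) (transition_jump_mem_Icc hw')).trans
      (by norm_num)
  have h₁' := abs_transition_sub_le_of_monotoneOn hm₁ hw hw'
  have h₂' := abs_transition_sub_le_of_monotoneOn hm₂ hw hw'
  rw [transition_congr heq hw, transition_congr heq hw',
    transition_sub_add_smul_jump hm₁ hm₂ a hw, transition_sub_add_smul_jump hm₁ hm₂ a hw']
  simp only [Pi.add_apply, Pi.smul_apply, smul_eq_mul]
  calc |_| = |(OCF.transition h₁ w - OCF.transition h₁ w') +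
          (OCF.transition h₂ w' - OCF.transition h₂ w) +
          a * (OCF.transition jump w - OCF.transition jump w')| := by ring_nf
    _ ≤ 0.8234 * (h₁ G - h₁ 0) + 0.8234 * (h₂ G - h₂ 0) + |a| * (0.8234 * 0.4) := by
      refine (abs_add_three _ _ _).trans (add_le_add_three h₁' ?_ ?_)
      · rwa [abs_sub_comm]
      · rw [abs_mul]
        gcongr
    _ ≤ 0.8234 * M := by linarith

end WeightedVariationLE

/-! ### Functions of bounded variation -/

lemma weightedVariationLE_of_boundedVariationOn {f : ℝ → ℝ} (hf : BoundedVariationOn f W) :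
    WeightedVariationLE f (eVariationOn f W).toReal := by
  have hloc := hf.locallyBoundedVariationOn
  have h₀ := zero_mem_W
  set V := variationOnFromTo f W 0
  have hV₀ : V 0 = 0 := variationOnFromTo.self f W 0
  have hVG : V G ≤ (eVariationOn f W).toReal :=
    (le_abs_self _).trans (variationOnFromTo.abs_le_eVariationOn hf)
  refine ⟨0, fun w => 2⁻¹ * (V w + f w), fun w => 2⁻¹ * (V w - f w), ?_, ?_, ?_, ?_⟩
  · exact fun w hw w' hw' hww => mul_le_mul_of_nonneg_left
      (variationOnFromTo.add_self_monotoneOn hloc h₀ hw hw' hww) (by norm_num)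
  · exact fun w hw w' hw' hww => mul_le_mul_of_nonneg_left
      (variationOnFromTo.sub_self_monotoneOn hloc h₀ hw hw' hww) (by norm_num)
  · intro w _
    simp only [zero_smul, add_zero, Pi.sub_apply]
    ring
  · dsimp only
    rw [hV₀, abs_zero]
    linarith

lemma dist_le_dist_variationOnFromTo {α E : Type*} [LinearOrder α] [PseudoMetricSpace E]
    {f : α → E} {s : Set α} (hf : LocallyBoundedVariationOn f s) {a x y : α} (ha : a ∈ s)
    (hx : x ∈ s) (hy : y ∈ s) :
    dist (f x) (f y) ≤ dist (variationOnFromTo f s a x) (variationOnFromTo f s a y) := by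
  wlog hxy : x ≤ y generalizing x y
  · rw [dist_comm, dist_comm (variationOnFromTo f s a x)]
    exact this hy hx (le_of_not_ge hxy)
  calc dist (f x) (f y) ≤ (eVariationOn f (s ∩ Icc x y)).toReal :=
        BoundedVariationOn.dist_le (hf x y hx hy) ⟨hx, left_mem_Icc.2 hxy⟩
          ⟨hy, right_mem_Icc.2 hxy⟩
    _ = variationOnFromTo f s a y - variationOnFromTo f s a x := by
        rw [variationOnFromTo.sub_right hf ha hy hx, variationOnFromTo.eq_of_le f s hxy]
    _ ≤ _ := by rw [dist_comm]; exact le_abs_self _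

/-- The variation up to `x` is monotone in `x`, hence continuous off a countable set, and `f` is
continuous wherever it is. -/
lemma stronglyMeasurable_of_locallyBoundedVariationOn_univ {E : Type*} [PseudoMetricSpace E]
    {f : ℝ → E} (hf : LocallyBoundedVariationOn f univ) : StronglyMeasurable f := by
  have hV : Monotone (variationOnFromTo f univ 0) :=
    monotoneOn_univ.1 (variationOnFromTo.monotoneOn hf (mem_univ 0))
  refine .of_countable_not_continuousAt <|
    hV.countable_not_continuousAt.mono fun x => mt fun hx => ?_
  exact tendsto_iff_dist_tendsto_zero.2 <| squeeze_zero (fun _ => dist_nonneg)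
    (fun y => dist_le_dist_variationOnFromTo hf (mem_univ 0) (mem_univ y) (mem_univ x))
    (tendsto_iff_dist_tendsto_zero.1 hx)

lemma aestronglyMeasurable_of_boundedVariationOn_Icc {E : Type*} [PseudoMetricSpace E] {f : ℝ → E}
    {a b : ℝ} (hf : BoundedVariationOn f (Icc a b)) :
    AEStronglyMeasurable f (volume.restrict (Icc a b)) := by
  rcases lt_or_ge b a with hab | hab
  · simp [Icc_eq_empty hab.not_ge]
  have hbv : BoundedVariationOn (f ∘ fun x => (projIcc a b hab x : ℝ)) univ :=
    ne_top_of_le_ne_top hf <| eVariationOn.comp_le_of_monotoneOn f _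
      (fun _ _ _ _ hxy => monotone_projIcc hab hxy) fun x _ => (projIcc a b hab x).2
  refine (stronglyMeasurable_of_locallyBoundedVariationOn_univ
    hbv.locallyBoundedVariationOn).aestronglyMeasurable.congr ?_
  filter_upwards [ae_restrict_mem measurableSet_Icc] with x hx
  simp [projIcc_of_mem hab hx]

lemma isBounded_image_of_boundedVariationOn {α E : Type*} [LinearOrder α] [PseudoMetricSpace E]
    {f : α → E} {s : Set α} (hf : BoundedVariationOn f s) : Bornology.IsBounded (f '' s) := by
  refine Metric.isBounded_iff.2 ⟨(eVariationOn f s).toReal, ?_⟩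
  rintro _ ⟨x, hx, rfl⟩ _ ⟨y, hy, rfl⟩
  exact hf.dist_le hx hy

/-! ### Integrals of series and of changes of variables -/

lemma integrable_tsum {α ι E : Type*} [MeasurableSpace α] {μ : Measure α} [Countable ι]
    [NormedAddCommGroup E] [CompleteSpace E] {F : ι → α → E} (hF : ∀ i, Integrable (F i) μ)
    (hsum : Summable fun i => ∫ a, ‖F i a‖ ∂μ) : Integrable (fun a => ∑' i, F i a) μ := by
  have henorm : ∑' i, ‖(hF i).toL1 (F i)‖ₑ ≠ ∞ := by
    simp only [enorm_eq_nnnorm]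
    rw [ENNReal.tsum_coe_ne_top_iff_summable, ← NNReal.summable_coe]
    refine hsum.congr fun i => ?_
    rw [coe_nnnorm, L1.norm_eq_integral_norm]
    exact integral_congr_ae ((hF i).coeFn_toL1.fun_comp norm).symm
  refine (L1.integrable_coeFn (∑' i, (hF i).toL1 (F i))).congr ?_
  filter_upwards [Lp.coeFn_tsum henorm, ae_all_iff.2 fun i => (hF i).coeFn_toL1] with a ha hFa
  rw [ha]
  exact tsum_congr hFa

section ChangeOfVariables

variable {ι E : Type*} [Countable ι] [NormedAddCommGroup E] [NormedSpace ℝ E]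
  {φ φ' : ι → ℝ → ℝ} {A : Set ℝ} {g : ℝ → E}

lemma integrableOn_tsum_abs_deriv_smul [CompleteSpace E] (hA : MeasurableSet A)
    (hφ : ∀ i, ∀ x ∈ A, HasDerivWithinAt (φ i) (φ' i x) A x) (hinj : ∀ i, InjOn (φ i) A)
    (hdisj : Pairwise (Function.onFun Disjoint fun i => φ i '' A))
    (hg : IntegrableOn g (⋃ i, φ i '' A)) :
    IntegrableOn (fun x => ∑' i, |φ' i x| • g (φ i x)) A ∧
      ∫ x in A, ∑' i, |φ' i x| • g (φ i x) = ∫ y in ⋃ i, φ i '' A, g y := by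
  have hmeas (i : ι) : MeasurableSet (φ i '' A) :=
    hA.image_of_continuousOn_injOn (fun x hx => (hφ i x hx).continuousWithinAt) (hinj i)
  have hint (i : ι) : IntegrableOn (fun x => |φ' i x| • g (φ i x)) A :=
    (integrableOn_image_iff_integrableOn_abs_deriv_smul hA (hφ i) (hinj i) g).1
      (hg.mono_set (subset_iUnion (fun i => φ i '' A) i))
  have hnorm : Summable fun i => ∫ x in A, ‖|φ' i x| • g (φ i x)‖ := by
    refine (hasSum_integral_iUnion hmeas hdisj hg.norm).summable.congr fun i => ?_
    rw [integral_image_eq_integral_abs_deriv_smul hA (hφ i) (hinj i)]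
    simp only [norm_smul, Real.norm_eq_abs, abs_abs, smul_eq_mul]
  refine ⟨integrable_tsum hint hnorm, ?_⟩
  refine (hasSum_integral_of_summable_integral_norm hint hnorm).unique ?_
  refine (hasSum_integral_iUnion hmeas hdisj hg).congr_fun fun i => ?_
  rw [integral_image_eq_integral_abs_deriv_smul hA (hφ i) (hinj i)]

end ChangeOfVariables

/-! ### The invariant measure -/

/-- The density of `Q∞` with respect to Lebesgue measure on `W`, without the normalising factor
`(3 log G)⁻¹`. -/
noncomputable def invDensity (w : ℝ) : ℝ :=
  if w < gg ^ 2 then 1 / (1 + w) + 1 / (1 - w) else 1 / (1 + w)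

lemma measurable_invDensity : Measurable invDensity :=
  .ite measurableSet_Iio (by fun_prop) (by fun_prop)

lemma invDensity_nonneg {w : ℝ} (hw : w ∈ W) : 0 ≤ invDensity w := by
  have h : 0 ≤ 1 / (1 + w) := one_div_nonneg.2 (by linarith [hw.1])
  unfold invDensity
  split_ifs with hlt
  · exact add_nonneg h (one_div_nonneg.2 (by linarith [gg_sq, gg_gt]))
  · exact h

lemma inv_mul_digitProb {s : ℝ} (hs : s ∈ Ioc (-gg ^ 2) G) (m : ℕ) :
    (1 + s)⁻¹ * digitProb m s = |-1 / (2 * m + 1 + s) ^ 2| * invDensity (branch m s) := by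
  have h := neg_one_lt_of_mem_signedW (Ioc_subset_Icc_self hs)
  have h₁ : 1 + s ≠ 0 := by linarith
  have hm := branch_denom_pos h m
  rw [abs_div, abs_neg, abs_one, abs_of_nonneg (sq_nonneg _), invDensity]
  rcases m with _ | m
  · have h₂ : 2 + s ≠ 0 := by linarith
    rw [if_neg fun hlt => (branch_lt_gg_sq_iff hs 0).1 hlt rfl, digitProb_zero, branch,
      Nat.cast_zero, mul_zero, zero_add,
      show 1 + 1 / (1 + s) = (2 + s) / (1 + s) by field_simp; ring]
    field_simp
  · rw [if_pos ((branch_lt_gg_sq_iff hs _).2 m.succ_ne_zero), digitProb_succ, branch]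
    have hx : 0 < 2 * (m : ℝ) + 2 + s := by linarith [m.cast_nonneg (α := ℝ)]
    rw [Nat.cast_succ] at hm ⊢
    set x := 2 * ((m : ℝ) + 1) + 1 + s with hx_def
    rw [show 2 * (m : ℝ) + 2 + s = x - 1 by rw [hx_def]; ring] at hx ⊢
    rw [show 2 * (m : ℝ) + 4 + s = x + 1 by rw [hx_def]; ring]
    have hx₁ : x + 1 ≠ 0 := by linarith
    have hadd : 1 + 1 / x = (x + 1) / x := by field_simp
    have hsub : 1 - 1 / x = (x - 1) / x := by field_simp
    rw [hadd, hsub]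
    field_simp
    ring

lemma eq_of_branch_eq_branch {s t : ℝ} (hs : s ∈ Ioc (-gg ^ 2) G) (ht : t ∈ Ioc (-gg ^ 2) G)
    {m k : ℕ} (h : branch m s = branch k t) : m = k ∧ s = t := by
  have hst : 2 * (m : ℝ) + 1 + s = 2 * k + 1 + t := by simpa [branch] using h
  have hlen : G - -gg ^ 2 = 2 := by rw [G_eq, gg_sq]; ring
  have hmk : (m : ℝ) < k + 1 := by linarith [hs.1, ht.2]
  have hkm : (k : ℝ) < m + 1 := by linarith [hs.2, ht.1]
  obtain rfl : m = k := le_antisymm (Nat.lt_succ_iff.1 (by exact_mod_cast hmk))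
    (Nat.lt_succ_iff.1 (by exact_mod_cast hkm))
  exact ⟨rfl, by linarith⟩

lemma iUnion_image_branch : ⋃ m, branch m '' Ioc (-gg ^ 2) G = Ioo 0 G := by
  have hlen : G = -gg ^ 2 + 2 := by rw [G_eq, gg_sq]; ring
  ext y
  simp only [mem_iUnion, mem_image]
  constructor
  · rintro ⟨m, s, hs, rfl⟩
    have h := neg_one_lt_of_mem_signedW (Ioc_subset_Icc_self hs)
    refine ⟨one_div_pos.2 (branch_denom_pos h m), ?_⟩
    calc branch m s ≤ branch 0 s := branch_antitone h m.zero_le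
      _ < branch 0 (-gg ^ 2) := one_div_lt_one_div_of_lt
          (branch_denom_pos (neg_one_lt_of_mem_signedW neg_gg_sq_mem_signedW) 0)
          (by linarith [hs.1])
      _ = G := branch_zero_neg_gg_sq
  · rintro ⟨hy₀, hyG⟩
    have hy : 1 - gg ^ 2 < 1 / y := by
      rw [lt_one_div (by linarith [gg_sq, gg_gt]) hy₀]
      calc y < branch 0 (-gg ^ 2) := by rwa [branch_zero_neg_gg_sq]
        _ = 1 / (1 - gg ^ 2) := by rw [branch, Nat.cast_zero]; ring_nf
    obtain ⟨m, hm, -⟩ := existsUnique_sub_zsmul_mem_Ioc two_pos (1 / y - 1) (-gg ^ 2)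
    rw [← hlen, zsmul_eq_mul] at hm
    lift m to ℕ using by
      have : (-1 : ℝ) < m := by linarith [hm.2]
      exact_mod_cast this
    refine ⟨m, _, hm, ?_⟩
    rw [branch, Int.cast_natCast, show 2 * (m : ℝ) + 1 + (1 / y - 1 - m * 2) = 1 / y by ring,
      one_div_one_div]

section Folding

variable {E : Type*} [NormedAddCommGroup E] [NormedSpace ℝ E] {h k : ℝ → E} {a b : ℝ}

lemma integrableOn_and_setIntegral_fold (ha : 0 ≤ a) (hab : a ≤ b)
    (hk : IntegrableOn k (Icc (-a) b))
    (hh : ∀ x ∈ Icc 0 b, h x = if x < a then k x + k (-x) else k x) :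
    IntegrableOn h (Icc 0 b) ∧ ∫ x in Icc 0 b, h x = ∫ x in Icc (-a) b, k x := by
  have hpre : Neg.neg ⁻¹' Ioc (-a) 0 = Icc 0 b ∩ Iio a := by
    ext x
    simp only [mem_preimage, mem_Ioc, mem_inter_iff, mem_Icc, mem_Iio]
    grind
  have hneg := Measure.measurePreserving_neg (volume : Measure ℝ)
  have hk_right : IntegrableOn k (Icc 0 b) := hk.mono_set (Icc_subset_Icc_left (by linarith))
  have hk_left : IntegrableOn k (Ioc (-a) 0) :=
    hk.mono_set (Ioc_subset_Icc_self.trans (Icc_subset_Icc_right (by linarith)))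
  have hk_neg : IntegrableOn ((Iio a).indicator fun x => k (-x)) (Icc 0 b) := by
    rw [IntegrableOn, integrable_indicator_iff measurableSet_Iio, IntegrableOn,
      Measure.restrict_restrict measurableSet_Iio, inter_comm, ← hpre]
    exact (hneg.integrableOn_comp_preimage measurableEmbedding_neg).2 hk_left
  have hsum : EqOn h (fun x => k x + (Iio a).indicator (fun x => k (-x)) x) (Icc 0 b) := by
    intro x hx
    rw [hh x hx]
    by_cases hxa : x < a <;> simp [hxa]
  refine ⟨(hk_right.add hk_neg).congr_fun hsum.symm measurableSet_Icc, ?_⟩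
  calc ∫ x in Icc 0 b, h x
      = (∫ x in Icc 0 b, k x) + ∫ x in Icc 0 b, (Iio a).indicator (fun x => k (-x)) x := by
        rw [setIntegral_congr_fun measurableSet_Icc hsum, integral_add hk_right hk_neg]
    _ = (∫ x in Ioc 0 b, k x) + ∫ x in Ioc (-a) 0, k x := by
        rw [setIntegral_indicator measurableSet_Iio, ← hpre,
          hneg.setIntegral_preimage_emb measurableEmbedding_neg k, integral_Icc_eq_integral_Ioc]
    _ = ∫ x in Icc (-a) b, k x := by
        rw [integral_Icc_eq_integral_Ioc, ← Ioc_union_Ioc_eq_Ioc (neg_nonpos.2 ha) (ha.trans hab),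
          add_comm, setIntegral_union (Ioc_disjoint_Ioc_of_le le_rfl) measurableSet_Ioc hk_left
            (hk_right.mono_set Ioc_subset_Icc_self)]

end Folding

lemma log_G_pos : 0 < Real.log G := Real.log_pos (by linarith [G_eq, gg_gt])

lemma setIntegral_invDensity : ∫ w in W, invDensity w = 3 * Real.log G := by
  have hsq := gg_sq
  have hgt := gg_gt
  have hG := G_eq
  have hint : IntegrableOn (fun s : ℝ => (1 + s)⁻¹) signedW :=
    (ContinuousOn.inv₀ (by fun_prop) fun s hs => by
      linarith [neg_one_lt_of_mem_signedW hs]).integrableOn_Icc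
  have hfold := (integrableOn_and_setIntegral_fold (h := invDensity) (sq_nonneg gg) gg_sq_mem_W.2
    hint fun w _ => by simp only [invDensity, one_div, sub_eq_add_neg]).2
  rw [hfold, integral_Icc_eq_integral_Ioc, ← intervalIntegral.integral_of_le (by linarith),
    intervalIntegral.integral_comp_add_left (fun x => x⁻¹),
    integral_inv_of_pos (by linarith) (by linarith)]
  have hcube : (1 + G) / (1 + -gg ^ 2) = G ^ 3 := by
    rw [div_eq_iff (by linarith), hG]
    grind
  rw [hcube, Real.log_pow, Nat.cast_ofNat]

lemma Qinf_eq_withDensity : Qinf = (volume.restrict W).withDensity fun w =>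
    ENNReal.ofReal ((3 * Real.log G)⁻¹ * invDensity w) := rfl

section Stationarity

variable {E : Type*} [NormedAddCommGroup E] [NormedSpace ℝ E] {f : ℝ → E}

/-- The branches `branch m` map `(-gg ^ 2, G]` onto disjoint sets filling `(0, G)`. -/
lemma integrableOn_and_setIntegral_signedTransition [CompleteSpace E]
    (hf : IntegrableOn (fun w => invDensity w • f w) W) :
    IntegrableOn (fun s => (1 + s)⁻¹ • signedTransition f s) signedW ∧
      ∫ s in signedW, (1 + s)⁻¹ • signedTransition f s = ∫ w in W, invDensity w • f w := by
  have hcov := integrableOn_tsum_abs_deriv_smul measurableSet_Ioc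
    (fun m s hs =>
      (hasDerivAt_branch (neg_one_lt_of_mem_signedW (Ioc_subset_Icc_self hs)) m).hasDerivWithinAt)
    (fun m s hs t ht hst => (eq_of_branch_eq_branch hs ht hst).2)
    (fun m k hmk => disjoint_left.2 <| by
      rintro _ ⟨s, hs, rfl⟩ ⟨t, ht, hst⟩
      exact hmk (eq_of_branch_eq_branch hs ht hst.symm).1)
    (iUnion_image_branch ▸ hf.mono_set Ioo_subset_Icc_self)
  have hseries : EqOn (fun s : ℝ => ∑' m : ℕ, |-1 / (2 * m + 1 + s) ^ 2| •
      invDensity (branch m s) • f (branch m s)) (fun s => (1 + s)⁻¹ • signedTransition f s)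
      (Ioc (-gg ^ 2) G) := fun s hs => by
    simp only [signedTransition, ← tsum_const_smul'', smul_smul, inv_mul_digitProb hs]
  rw [iUnion_image_branch, setIntegral_congr_fun measurableSet_Ioc hseries,
    ← integral_Icc_eq_integral_Ioc, ← integral_Icc_eq_integral_Ioo] at hcov
  exact ⟨(integrableOn_Icc_iff_integrableOn_Ioc (by simp)).2
    (hcov.1.congr_fun hseries measurableSet_Ioc), hcov.2⟩

lemma integrableOn_and_setIntegral_transition [CompleteSpace E]
    (hf : IntegrableOn (fun w => invDensity w • f w) W) :
    IntegrableOn (fun w => invDensity w • transition f w) W ∧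
      ∫ w in W, invDensity w • transition f w = ∫ w in W, invDensity w • f w := by
  obtain ⟨hint, hintegral⟩ := integrableOn_and_setIntegral_signedTransition hf
  have hsq := gg_sq
  have hgt := gg_gt
  rw [← hintegral]
  refine integrableOn_and_setIntegral_fold (sq_nonneg gg) gg_sq_mem_W.2 hint fun w hw => ?_
  have h₁ : 1 + w ≠ 0 := by linarith [hw.1]
  split_ifs with hlt
  · have h₂ : 1 - w ≠ 0 := by linarith
    rw [invDensity, if_pos hlt, transition_of_lt hlt, smul_add, smul_smul, smul_smul,
      ← sub_eq_add_neg 1 w]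
    congr 2 <;> field_simp <;> ring
  · rw [invDensity, if_neg hlt, transition_of_ge (not_lt.1 hlt), one_div]

lemma density_Qinf_smul {w : ℝ} (hw : w ∈ W) (c : E) :
    (ENNReal.ofReal ((3 * Real.log G)⁻¹ * invDensity w)).toReal • c =
      (3 * Real.log G)⁻¹ • invDensity w • c := by
  have := log_G_pos
  rw [ENNReal.toReal_ofReal (mul_nonneg (by positivity) (invDensity_nonneg hw)), mul_smul]

lemma integrable_Qinf_iff :
    Integrable f Qinf ↔ IntegrableOn (fun w => invDensity w • f w) W := by
  have hc : (3 * Real.log G)⁻¹ ≠ 0 := inv_ne_zero (mul_pos three_pos log_G_pos).ne'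
  rw [Qinf_eq_withDensity, integrable_withDensity_iff_integrable_smul'
    (measurable_invDensity.const_mul _).ennreal_ofReal (ae_of_all _ fun _ => ENNReal.ofReal_lt_top)]
  exact (integrableOn_congr_fun (fun w hw => density_Qinf_smul hw (f w)) measurableSet_Icc).trans
    (integrable_fun_smul_iff hc _)

lemma integral_Qinf :
    ∫ w, f w ∂Qinf = (3 * Real.log G)⁻¹ • ∫ w in W, invDensity w • f w := by
  rw [Qinf_eq_withDensity, integral_withDensity_eq_integral_toReal_smul
    (measurable_invDensity.const_mul _).ennreal_ofReal (ae_of_all _ fun _ => ENNReal.ofReal_lt_top),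
    setIntegral_congr_fun measurableSet_Icc fun w hw => density_Qinf_smul hw (f w), integral_smul]

variable [CompleteSpace E]

lemma integrable_transition (hf : Integrable f Qinf) : Integrable (transition f) Qinf :=
  integrable_Qinf_iff.2 (integrableOn_and_setIntegral_transition (integrable_Qinf_iff.1 hf)).1

lemma integral_transition (hf : Integrable f Qinf) :
    ∫ w, transition f w ∂Qinf = ∫ w, f w ∂Qinf := by
  rw [integral_Qinf, integral_Qinf,
    (integrableOn_and_setIntegral_transition (integrable_Qinf_iff.1 hf)).2]

lemma integrable_iterate_transition (hf : Integrable f Qinf) (n : ℕ) :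
    Integrable (transition^[n] f) Qinf := by
  induction n with
  | zero => exact hf
  | succ n ih =>
    rw [Function.iterate_succ_apply']
    exact integrable_transition ih

lemma integral_iterate_transition (hf : Integrable f Qinf) (n : ℕ) :
    ∫ w, transition^[n] f w ∂Qinf = ∫ w, f w ∂Qinf := by
  induction n with
  | zero => rfl
  | succ n ih =>
    rw [Function.iterate_succ_apply', integral_transition (integrable_iterate_transition hf n), ih]

end Stationarity

instance isProbabilityMeasure_Qinf : IsProbabilityMeasure Qinf := by
  rw [isProbabilityMeasure_iff_real]
  calc Qinf.real univ = ∫ _, (1 : ℝ) ∂Qinf := by simp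
    _ = (3 * Real.log G)⁻¹ * (3 * Real.log G) := by
        simp only [integral_Qinf, smul_eq_mul, mul_one, setIntegral_invDensity]
    _ = 1 := inv_mul_cancel₀ (mul_pos three_pos log_G_pos).ne'

lemma Qinf_absolutelyContinuous : Qinf ≪ volume.restrict W :=
  withDensity_absolutelyContinuous _ _

lemma ae_mem_W_Qinf : ∀ᵐ w ∂Qinf, w ∈ W :=
  Qinf_absolutelyContinuous.ae_le (ae_restrict_mem measurableSet_Icc)

lemma integrable_Qinf_of_boundedVariationOn {E : Type*} [NormedAddCommGroup E] {f : ℝ → E}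
    (hf : BoundedVariationOn f W) : Integrable f Qinf := by
  obtain ⟨C, hC⟩ := isBounded_iff_forall_norm_le.1 (isBounded_image_of_boundedVariationOn hf)
  refine .of_bound ((aestronglyMeasurable_of_boundedVariationOn_Icc hf).mono_ac
    Qinf_absolutelyContinuous) C ?_
  filter_upwards [ae_mem_W_Qinf] with w hw using hC _ (mem_image_of_mem f hw)

/-! ### Identification with the operator `U` -/

lemma uF_one (w : ℝ) (m : ℕ) : uF w 1 (2 * m + 1) = branch m w := by
  simp [uF, branch]

lemma uF_neg_one {w : ℝ} (h : w < gg ^ 2) (m : ℕ) : uF w (-1) (2 * m + 1) = branch m (-w) := by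
  simp [uF, branch, h, sub_eq_add_neg]

lemma PF_of_lt {w : ℝ} (hw : w ∈ W) (h : w < gg ^ 2) {e : ℤ} (he : e = 1 ∨ e = -1) (m : ℕ) :
    PF w e (2 * m + 1) = (1 - e * w) / 2 * digitProb m (e * w) := by
  have he' : (e : ℝ) ^ 2 = 1 := by rcases he with rfl | rfl <;> norm_num
  have hs : -1 < e * w ∧ e * w < 1 := by
    have := hw.1
    have := gg_sq
    have := gg_gt
    rcases he with rfl | rfl <;> constructor <;> push_cast <;> linarith
  generalize hse : (e : ℝ) * w = s at hs
  have hsq : w ^ 2 = s ^ 2 := by rw [← hse, mul_pow, he', one_mul]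
  have hs₁ : 1 + s ≠ 0 := by linarith
  cases m with
  | zero =>
    have hs₂ : 2 + s ≠ 0 := by linarith
    simp only [PF, if_pos h, hsq, hse, digitProb_zero]
    norm_num
    field_simp
    ring
  | succ m =>
    have hm : (2 * ((m + 1 : ℕ) : ℤ) + 1) ≠ 1 := by omega
    have h₄ : 2 * (m : ℝ) + 4 + s ≠ 0 := by linarith
    simp only [PF, if_pos h, hsq, hse, digitProb_succ, if_neg hm]
    push_cast
    rw [show 2 * ((m : ℝ) + 1) + 1 - 1 + 0 + s = 2 * m + 2 + s by ring,
      show 2 * ((m : ℝ) + 1) + 1 + 1 + s = 2 * m + 4 + s by ring]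
    field_simp
    ring

lemma PF_one_of_ge {w : ℝ} (hw : w ∈ W) (h : gg ^ 2 ≤ w) (m : ℕ) :
    PF w 1 (2 * m + 1) = digitProb m w := by
  cases m with
  | zero =>
    have h₁ : 1 + w ≠ 0 := by linarith [hw.1]
    simp only [PF, if_neg h.not_gt, digitProb_zero]
    norm_num
    field_simp
  | succ m =>
    have hm : (2 * ((m + 1 : ℕ) : ℤ) + 1) ≠ 1 := by omega
    simp only [PF, if_neg h.not_gt, digitProb_succ, if_neg hm]
    push_cast
    ring_nf

lemma PF_neg_one_of_ge {w : ℝ} (h : gg ^ 2 ≤ w) (i : ℤ) : PF w (-1) i = 0 := by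
  simp [PF, h.not_gt]

lemma U_eq_transition {f : ℝ → ℂ} (hf : Bornology.IsBounded (f '' W)) {w : ℝ} (hw : w ∈ W) :
    U f w = transition f w := by
  rcases lt_or_ge w (gg ^ 2) with h | h
  · have hsum := summable_digitProb_smul (W_subset_signedW hw) hf
    have hsum' := summable_digitProb_smul (neg_mem_signedW hw h.le) hf
    rw [transition_of_lt h, signedTransition, signedTransition, ← hsum.tsum_const_smul,
      ← hsum'.tsum_const_smul, ← (hsum.const_smul _).tsum_add (hsum'.const_smul _)]
    refine tsum_congr fun m => ?_
    rw [uF_one, uF_neg_one h, PF_of_lt hw h (.inl rfl), PF_of_lt hw h (.inr rfl)]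
    simp [mul_assoc]
  · rw [transition_of_ge h]
    refine tsum_congr fun m => ?_
    rw [uF_one, PF_one_of_ge hw h, PF_neg_one_of_ge h]
    simp

lemma iterate_U_eq_iterate_transition {f : ℝ → ℂ} (hf : Bornology.IsBounded (f '' W)) (n : ℕ) :
    EqOn (U^[n] f) (transition^[n] f) W := by
  induction n with
  | zero => exact fun _ _ => rfl
  | succ n ih =>
    intro w hw
    have hbdd := isBounded_iterate_transition hf n
    rw [← ih.image_eq] at hbdd
    rw [Function.iterate_succ_apply', Function.iterate_succ_apply', U_eq_transition hbdd hw,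
      transition_congr ih hw]

/-! ### Convergence -/

section Convergence

variable {w M : ℝ}

lemma sub_integral_Qinf_le {f : ℝ → ℝ} (hf : Integrable f Qinf)
    (h : ∀ w' ∈ W, f w - f w' ≤ M) : f w - ∫ y, f y ∂Qinf ≤ M := by
  have hle : ∫ _, (f w - M) ∂Qinf ≤ ∫ y, f y ∂Qinf :=
    integral_mono_ae (integrable_const _) hf <|
      ae_mem_W_Qinf.mono fun w' hw' => by linarith [h w' hw']
  rw [integral_const, probReal_univ, one_smul] at hle
  linarith

lemma iterate_transition_sub_integral_le {f : ℝ → ℝ} (hf : BoundedVariationOn f W) (n : ℕ)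
    (hw : w ∈ W) :
    transition^[n] f w - ∫ y, f y ∂Qinf ≤ 0.8234 ^ n * (eVariationOn f W).toReal := by
  have hint := integrable_Qinf_of_boundedVariationOn hf
  rw [← integral_iterate_transition hint n]
  refine sub_integral_Qinf_le (integrable_iterate_transition hint n) fun w' hw' => ?_
  cases n with
  | zero => rw [pow_zero, one_mul]; exact hf.sub_le hw hw'
  | succ n =>
    rw [Function.iterate_succ_apply', pow_succ', mul_assoc]
    have hvar := (weightedVariationLE_of_boundedVariationOn hf).iterate_transition n
    exact (le_abs_self _).trans (hvar.abs_transition_sub_le hw hw')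

end Convergence

end OCF

theorem ocf_Un_convergence_general {E : Type*} [NormedAddCommGroup E] [NormedSpace ℝ E]
    [CompleteSpace E] (n : ℕ) (f : ℝ → E) (hf : BoundedVariationOn f W) (w : ℝ) (hw : w ∈ W) :
    ‖transition^[n] f w - ∫ y, f y ∂Qinf‖ ≤ 0.8234 ^ n * (eVariationOn f W).toReal := by
  obtain ⟨L, hL, hLnorm⟩ := exists_dual_vector'' ℝ (transition^[n] f w - ∫ y, f y ∂Qinf)
  have hvar : eVariationOn (L ∘ f) W ≤ eVariationOn f W := by
    have hlip : LipschitzOnWith 1 L univ := (L.lipschitz.weaken hL).lipschitzOnWith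
    simpa using hlip.comp_eVariationOn_le (mapsTo_univ f W)
  calc ‖transition^[n] f w - ∫ y, f y ∂Qinf‖
      = L (transition^[n] f w - ∫ y, f y ∂Qinf) := hLnorm.symm
    _ = transition^[n] (L ∘ f) w - ∫ y, (L ∘ f) y ∂Qinf := by
        rw [map_sub, ← map_iterate_transition L (isBounded_image_of_boundedVariationOn hf) n hw,
          ← L.integral_comp_comm (integrable_Qinf_of_boundedVariationOn hf)]
        rfl
    _ ≤ 0.8234 ^ n * (eVariationOn (L ∘ f) W).toReal :=
        iterate_transition_sub_integral_le (ne_top_of_le_ne_top hf hvar) n hw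
    _ ≤ 0.8234 ^ n * (eVariationOn f W).toReal := by gcongr

/-- With `θ = 0.8234`, for every `n ∈ ℕ`, every `f : W → ℂ` of bounded variation and every
`w ∈ W`, `|Uⁿ f(w) - ∫_W f dQ∞| ≤ θⁿ var f`. -/
theorem ocf_Un_convergence (n : ℕ) (f : ℝ → ℂ)
    (hf : BoundedVariationOn f (Set.Icc (0 : ℝ) G))
    (w : ℝ) (hw : w ∈ Set.Icc (0 : ℝ) G) :
    ‖U^[n] f w - ∫ y, f y ∂Qinf‖ ≤
      0.8234 ^ n * (eVariationOn f (Set.Icc (0 : ℝ) G)).toReal := by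
  rw [iterate_U_eq_iterate_transition (isBounded_image_of_boundedVariationOn hf) n hw]
  exact ocf_Un_convergence_general n f hf w hw
end

section
/- (Gauss–Kuzmin-type equation) For every n ≥ 1 and every x ∈ [0,1], H_{n+1}(x) = Σ_{(i,ε)} ε · (H_n(1/i) − H_n(1/(i+εx))), where the sum runs over all pairs (i,ε) with i an odd positive integer, ε ∈ {−1,1}, and i + ε > 1. -/
open Real MeasureTheory Filter Set
open scoped ENNReal NNReal Classical

namespace OCF

/-- The odd Gauss map. -/
noncomputable def T (x : ℝ) : ℝ :=
  if x = 0 then 0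
  else if Odd ⌊1 / x⌋ then Int.fract (1 / x) else 1 - Int.fract (1 / x)

/-- `eps x n` is `ε_n(x)`; by convention `ε_0(x) = 1`. -/
noncomputable def eps (x : ℝ) : ℕ → ℤ
  | 0 => 1
  | n + 1 => if Odd ⌊1 / (T^[n] x)⌋ then 1 else -1

/-- `a x n` is the `n`-th odd partial quotient `a_n(x)` (for `n ≥ 1`). -/
noncomputable def a (x : ℝ) : ℕ → ℤ
  | 0 => 1
  | n + 1 => if Odd ⌊1 / (T^[n] x)⌋ then ⌊1 / (T^[n] x)⌋ else 1 + ⌊1 / (T^[n] x)⌋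

/-- `r x n = r_n(x) = a_n(x) + ε_n(x) Tⁿ(x)` for `n ≥ 1`. -/
noncomputable def r (x : ℝ) (n : ℕ) : ℝ := (a x n : ℝ) + (eps x n : ℝ) * T^[n] x

/-- The distribution functions: `H μ 0 x = μ([0,x])` and, for `n ≥ 1`,
`H μ n x = μ({y ∈ (0,1) : y irrational, 1/r_{n+1}(y) < x})`. -/
noncomputable def H (μ : Measure ℝ) : ℕ → ℝ → ℝ
  | 0 => fun x => (μ (Set.Icc 0 x)).toReal
  | n + 1 => fun x =>
      (μ {y | y ∈ Set.Ioo (0 : ℝ) 1 ∧ Irrational y ∧ 1 / r y (n + 2) < x}).toReal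

/-- `h μ n x = H_n'(x) / ((x+G-1)⁻¹ - (x-G-1)⁻¹)`, the derivative being taken within `[0,1]`. -/
noncomputable def h (μ : Measure ℝ) (n : ℕ) (x : ℝ) : ℝ :=
  derivWithin (H μ n) (Set.Icc 0 1) x / ((x + G - 1)⁻¹ - (x - G - 1)⁻¹)

/-- `η = 4g Σ_{i odd} 1/((G+i) i (i+2))`. -/
noncomputable def eta : ℝ :=
  4 * gg * ∑' m : ℕ, 1 / ((G + (2 * (m : ℝ) + 1)) * (2 * (m : ℝ) + 1) * (2 * (m : ℝ) + 3))

end OCF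

open OCF

/-! Write `F_n` for the distribution function of `T^n y`, with `y` drawn from `μ` on `[0, 1]`. Since
`1 / r_{n+1}(y) = T^n y` whenever `T^n y ≠ 0`, and a non-atomic measure does not charge countable
sets, `H_n = F_n` on `(-∞, 1]`. On each cell `(1/(2m+3), 1/(2m+1)]` the odd Gauss map is the tent
`T z = 1 - |1/z - (2m+2)|`, so there `T z < x` fails exactly on the interval
`[1/(2m+3-x), 1/(2m+1+x)]`. Subtracting the mass of that interval from the mass of the cell and
summing over the cells gives the equation. -/

namespace OCF

section GeneralMeasure

variable {α β : Type*} [MeasurableSpace α] [MeasurableSpace β]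

lemma hasSum_measureReal_iUnion {ι : Type*} [Countable ι] (ν : Measure α) [IsFiniteMeasure ν]
    {s : ι → Set α} (hs : ∀ i, MeasurableSet (s i))
    (hd : Pairwise (Function.onFun Disjoint s)) :
    HasSum (fun i ↦ ν.real (s i)) (ν.real (⋃ i, s i)) := by
  simpa only [Measure.toSignedMeasure_apply_measurable, hs, MeasurableSet.iUnion hs]
    using ν.toSignedMeasure.hasSum_of_disjoint_iUnion hs hd

lemma nullSingletonClass_map_of_countable_fibers [MeasurableSingletonClass β] (ν : Measure α)
    [NullSingletonClass ν] {f : α → β} (hf : Measurable f) (hfib : ∀ b, (f ⁻¹' {b}).Countable) :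
    NullSingletonClass (ν.map f) where
  measure_singleton b := by
    rw [Measure.map_apply hf (measurableSet_singleton b), (hfib b).measure_zero]

lemma measureReal_Ioc_eq_sub (ν : Measure ℝ) [IsFiniteMeasure ν] [NullSingletonClass ν] {p q : ℝ}
    (hpq : p ≤ q) : ν.real (Ioc p q) = ν.real (Iio q) - ν.real (Iio p) := by
  rw [measureReal_congr Iio_ae_eq_Iic, measureReal_congr Iio_ae_eq_Iic,
    ← measureReal_sdiff (Iic_subset_Iic.2 hpq) measurableSet_Iic, Iic_sdiff_Iic]

lemma ae_irrational (ν : Measure ℝ) [NullSingletonClass ν] : ∀ᵐ y ∂ν, Irrational y :=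
  (countable_range ((↑) : ℚ → ℝ)).ae_notMem ν

end GeneralMeasure

lemma measurable_T : Measurable T := by
  have hinv : Measurable fun x : ℝ ↦ 1 / x := by fun_prop
  have hodd : MeasurableSet {x : ℝ | Odd ⌊1 / x⌋} :=
    (Int.measurable_floor.comp hinv) (.of_discrete (s := {n : ℤ | Odd n}))
  exact .ite (measurableSet_singleton 0) measurable_const <|
    .ite hodd (measurable_fract.comp hinv) ((measurable_fract.comp hinv).const_sub 1)

lemma T_mem_Icc (z : ℝ) : T z ∈ Icc (0 : ℝ) 1 := by
  have hnonneg := Int.fract_nonneg (1 / z)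
  have hlt := Int.fract_lt_one (1 / z)
  unfold T
  split_ifs <;> constructor <;> linarith

lemma countable_preimage_T_singleton (c : ℝ) : (T ⁻¹' {c}).Countable := by
  have hsub : T ⁻¹' {c} ⊆
      insert 0 (range (fun k : ℤ ↦ 1 / (k + c)) ∪ range (fun k : ℤ ↦ 1 / (k + (1 - c)))) := by
    rintro z rfl
    by_cases hz : z = 0
    · exact .inl hz
    by_cases hodd : Odd ⌊1 / z⌋
    · refine .inr (.inl ⟨⌊1 / z⌋, ?_⟩)
      simp only [T, if_neg hz, if_pos hodd, Int.floor_add_fract, one_div_one_div]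
    · refine .inr (.inr ⟨⌊1 / z⌋, ?_⟩)
      simp only [T, if_neg hz, if_neg hodd, sub_sub_cancel, Int.floor_add_fract, one_div_one_div]
  exact (((countable_range _).union (countable_range _)).insert 0).mono hsub

lemma one_div_r_succ {y : ℝ} {n : ℕ} (hy : T^[n] y ≠ 0) : 1 / r y (n + 1) = T^[n] y := by
  have hr : r y (n + 1) = 1 / T^[n] y := by
    simp only [r, a, eps, Function.iterate_succ_apply', T, if_neg hy]
    split_ifs <;> simp only [Int.fract] <;> push_cast <;> ring
  rw [hr, one_div_one_div]

/-- The `m`-th cell of the partition of `(0, 1]` into the intervals on which `T` is a tent map in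
the variable `1 / z`. It joins the points with first digit `(a₁, ε₁) = (2m+1, 1)` to those with
`(a₁, ε₁) = (2m+3, -1)`. -/
def cell (m : ℕ) : Set ℝ := Ioc (1 / (2 * (m : ℝ) + 3)) (1 / (2 * (m : ℝ) + 1))

lemma measurableSet_cell (m : ℕ) : MeasurableSet (cell m) := measurableSet_Ioc

lemma pos_of_mem_cell {m : ℕ} {z : ℝ} (hz : z ∈ cell m) : 0 < z :=
  lt_trans (by positivity) hz.1

lemma mem_cell_iff {m : ℕ} {z : ℝ} (hz : 0 < z) :
    z ∈ cell m ↔ 1 / z ∈ Ico (2 * (m : ℝ) + 1) (2 * (m : ℝ) + 3) := by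
  rw [cell, mem_Ioc, mem_Ico, one_div_lt (by positivity) hz, le_one_div hz (by positivity),
    and_comm]

lemma pairwise_disjoint_cell : Pairwise (Function.onFun Disjoint cell) := by
  have hanti : Antitone fun m : ℕ ↦ 1 / (2 * (m : ℝ) + 1) := fun m k hmk ↦ by
    dsimp only
    gcongr
  convert! hanti.pairwise_disjoint_on_Ioc_succ using 4 with m
  rw [Nat.succ_eq_succ, cell]
  push_cast
  ring_nf

lemma Ioc_subset_iUnion_cell : Ioc (0 : ℝ) 1 ⊆ ⋃ m, cell m := by
  rintro z ⟨hz0, hz1⟩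
  have hw : 1 ≤ 1 / z := (one_le_div hz0).2 hz1
  have hle := Nat.floor_le (a := (1 / z - 1) / 2) (by linarith)
  have hlt := Nat.lt_floor_add_one ((1 / z - 1) / 2)
  exact mem_iUnion.2 ⟨⌊(1 / z - 1) / 2⌋₊,
    (mem_cell_iff hz0).2 ⟨by linarith, by linarith⟩⟩

lemma T_eq_of_mem_cell {m : ℕ} {z : ℝ} (hz : z ∈ cell m) :
    T z = 1 - |1 / z - (2 * m + 2)| := by
  have hz0 := pos_of_mem_cell hz
  obtain ⟨hge, hlt⟩ := (mem_cell_iff hz0).1 hz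
  rw [T, if_neg hz0.ne']
  rcases lt_or_ge (1 / z) (2 * m + 2) with hw | hw
  · have hfloor : ⌊1 / z⌋ = 2 * m + 1 :=
      Int.floor_eq_iff.2 (by push_cast; constructor <;> linarith)
    rw [if_pos (hfloor ▸ odd_two_mul_add_one _), Int.fract, hfloor, abs_of_neg (by linarith)]
    push_cast
    ring
  · have hfloor : ⌊1 / z⌋ = 2 * m + 2 :=
      Int.floor_eq_iff.2 (by push_cast; constructor <;> linarith)
    have heven : ¬ Odd (2 * (m : ℤ) + 2) := by grind
    rw [if_neg (hfloor ▸ heven), Int.fract, hfloor, abs_of_nonneg (by linarith)]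
    push_cast
    ring

lemma cell_inter_preimage_T_Iio {x : ℝ} (hx : x ∈ Icc (0 : ℝ) 1) (m : ℕ) :
    cell m ∩ T ⁻¹' Iio x =
      cell m \ Icc (1 / (2 * (m : ℝ) + 3 - x)) (1 / (2 * (m : ℝ) + 1 + x)) := by
  obtain ⟨hx0, hx1⟩ := hx
  have : (0 : ℝ) ≤ m := m.cast_nonneg
  ext z
  refine and_congr_right fun hz ↦ ?_
  have hz0 := pos_of_mem_cell hz
  rw [mem_preimage, mem_Iio, T_eq_of_mem_cell hz, sub_lt_comm, ← not_le, not_iff_not, abs_le,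
    mem_Icc, one_div_le (by linarith) hz0, le_one_div hz0 (by linarith)]
  constructor <;> rintro ⟨h₁, h₂⟩ <;> constructor <;> linarith

lemma measureReal_cell_inter_preimage_T_Iio (ν : Measure ℝ) [IsFiniteMeasure ν]
    [NullSingletonClass ν] {x : ℝ} (hx : x ∈ Icc (0 : ℝ) 1) (m : ℕ) :
    ν.real (cell m ∩ T ⁻¹' Iio x) =
      (ν.real (Iio (1 / (2 * (m : ℝ) + 1))) - ν.real (Iio (1 / (2 * (m : ℝ) + 1 + x))))
        - (ν.real (Iio (1 / (2 * (m : ℝ) + 3))) - ν.real (Iio (1 / (2 * (m : ℝ) + 3 - x)))) := by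
  have : (0 : ℝ) ≤ m := m.cast_nonneg
  have hleft : 1 / (2 * (m : ℝ) + 3) ≤ 1 / (2 * m + 3 - x) :=
    one_div_le_one_div_of_le (by linarith [hx.2]) (by linarith [hx.1])
  have hmid : 1 / (2 * (m : ℝ) + 3 - x) ≤ 1 / (2 * m + 1 + x) :=
    one_div_le_one_div_of_le (by linarith [hx.1]) (by linarith [hx.2])
  have hright : 1 / (2 * (m : ℝ) + 1 + x) ≤ 1 / (2 * m + 1) :=
    one_div_le_one_div_of_le (by linarith) (by linarith [hx.1])
  rw [cell_inter_preimage_T_Iio hx, measureReal_congr (ae_eq_rfl.diff Ioc_ae_eq_Icc.symm), cell,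
    measureReal_sdiff (Ioc_subset_Ioc hleft hright) measurableSet_Ioc,
    measureReal_Ioc_eq_sub ν (hleft.trans (hmid.trans hright)), measureReal_Ioc_eq_sub ν hmid]
  ring

lemma hasSum_measureReal_map_T_Iio (ν : Measure ℝ) [IsFiniteMeasure ν] [NullSingletonClass ν]
    (hν : ∀ᵐ z ∂ν, z ∈ Ioc (0 : ℝ) 1) {x : ℝ} (hx : x ∈ Icc (0 : ℝ) 1) :
    HasSum (fun m : ℕ ↦
      (ν.real (Iio (1 / (2 * (m : ℝ) + 1))) - ν.real (Iio (1 / (2 * (m : ℝ) + 1 + x))))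
        - (ν.real (Iio (1 / (2 * (m : ℝ) + 3))) - ν.real (Iio (1 / (2 * (m : ℝ) + 3 - x)))))
      ((ν.map T).real (Iio x)) := by
  have hcells : (T ⁻¹' Iio x : Set ℝ) =ᵐ[ν] ⋃ m, cell m ∩ T ⁻¹' Iio x := by
    filter_upwards [hν.mono fun z hz ↦ Ioc_subset_iUnion_cell hz] with z hz
    rw [← iUnion_inter]
    exact propext (and_iff_right hz).symm
  rw [map_measureReal_apply measurable_T measurableSet_Iio, measureReal_congr hcells]
  simp only [← measureReal_cell_inter_preimage_T_Iio ν hx]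
  exact hasSum_measureReal_iUnion ν
    (fun m ↦ (measurableSet_cell m).inter (measurable_T measurableSet_Iio))
    fun i j hij ↦ (pairwise_disjoint_cell hij).mono inter_subset_left inter_subset_left

/-- The distribution of `Tⁿ y` for `y` drawn from the restriction of `μ` to `[0, 1]`. On `(-∞, 1]`,
`H μ n` is its distribution function, see `H_eq_orbitLaw_Iio`. -/
noncomputable def orbitLaw (μ : Measure ℝ) (n : ℕ) : Measure ℝ :=
  (μ.restrict (Icc 0 1)).map T^[n]

section OrbitLaw

variable (μ : Measure ℝ)

lemma orbitLaw_succ (n : ℕ) : orbitLaw μ (n + 1) = (orbitLaw μ n).map T := by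
  rw [orbitLaw, orbitLaw, Measure.map_map measurable_T (measurable_T.iterate n),
    Function.iterate_succ']

instance [IsFiniteMeasure μ] (n : ℕ) : IsFiniteMeasure (orbitLaw μ n) := by
  unfold orbitLaw
  infer_instance

variable [NullSingletonClass μ]

instance (n : ℕ) : NullSingletonClass (orbitLaw μ n) := by
  induction n with
  | zero =>
    rw [orbitLaw, Function.iterate_zero, Measure.map_id]
    infer_instance
  | succ n ih =>
    rw [orbitLaw_succ]
    exact nullSingletonClass_map_of_countable_fibers _ measurable_T countable_preimage_T_singleton

lemma ae_orbitLaw_mem_Ioc (n : ℕ) : ∀ᵐ z ∂orbitLaw μ n, z ∈ Ioc (0 : ℝ) 1 := by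
  have hIcc : ∀ᵐ z ∂orbitLaw μ n, z ∈ Icc (0 : ℝ) 1 := by
    refine (ae_map_iff (measurable_T.iterate n).aemeasurable measurableSet_Icc).2 ?_
    exact (ae_restrict_mem measurableSet_Icc).mono fun y hy ↦
      MapsTo.iterate (fun z _ ↦ T_mem_Icc z) n hy
  filter_upwards [hIcc, Measure.ae_ne _ 0] with z hz hz0
  exact ⟨hz.1.lt_of_ne' hz0, hz.2⟩

lemma ae_iterate_T_ne_zero (n : ℕ) : ∀ᵐ y ∂μ, y ∈ Icc (0 : ℝ) 1 → T^[n] y ≠ 0 :=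
  (ae_restrict_iff' measurableSet_Icc).1 <|
    ae_of_ae_map (measurable_T.iterate n).aemeasurable (Measure.ae_ne (orbitLaw μ n) 0)

lemma setOf_one_div_r_lt_ae_eq (n : ℕ) (x : ℝ) :
    {y | y ∈ Ioo (0 : ℝ) 1 ∧ Irrational y ∧ 1 / r y (n + 1) < x}
      =ᵐ[μ] (T^[n] ⁻¹' Iio x ∩ Icc 0 1 : Set ℝ) := by
  rw [eventuallyEq_set]
  filter_upwards [ae_irrational μ, ae_iterate_T_ne_zero μ n] with y hirr hne
  constructor
  · rintro ⟨hy, -, hlt⟩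
    have hy' := Ioo_subset_Icc_self hy
    exact ⟨by rwa [one_div_r_succ (hne hy')] at hlt, hy'⟩
  · rintro ⟨hlt, hy⟩
    exact ⟨⟨hy.1.lt_of_ne' hirr.ne_zero, hy.2.lt_of_ne hirr.ne_one⟩, hirr,
      by rwa [one_div_r_succ (hne hy)]⟩

lemma H_eq_orbitLaw_Iio (n : ℕ) {x : ℝ} (hx : x ≤ 1) :
    H μ n x = (orbitLaw μ n).real (Iio x) := by
  rw [orbitLaw, map_measureReal_apply (measurable_T.iterate n) measurableSet_Iio,
    measureReal_restrict_apply (measurable_T.iterate n measurableSet_Iio)]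
  cases n with
  | zero =>
    have hIco : T^[0] ⁻¹' Iio x ∩ Icc (0 : ℝ) 1 = Ico 0 x := by
      ext y
      simp only [Function.iterate_zero, preimage_id, mem_inter_iff, mem_Iio, mem_Icc, mem_Ico]
      grind
    rw [hIco, measureReal_congr Ico_ae_eq_Icc]
    rfl
  | succ n => exact measureReal_congr (setOf_one_div_r_lt_ae_eq μ (n + 1) x)

end OrbitLaw

end OCF

theorem ocf_gauss_kuzmin_equation_general (μ : Measure ℝ) [IsFiniteMeasure μ]
    [NullSingletonClass μ] (n : ℕ) {x : ℝ} (hx : x ∈ Set.Icc (0 : ℝ) 1) :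
    HasSum (fun m : ℕ ↦
      (H μ n (1 / (2 * (m : ℝ) + 1)) - H μ n (1 / (2 * (m : ℝ) + 1 + x)))
        - (H μ n (1 / (2 * (m : ℝ) + 3)) - H μ n (1 / (2 * (m : ℝ) + 3 - x))))
      (H μ (n + 1) x) := by
  have hH (p : ℝ) (hp : 1 ≤ p) : H μ n (1 / p) = (orbitLaw μ n).real (Iio (1 / p)) :=
    H_eq_orbitLaw_Iio μ n (div_le_one_of_le₀ hp (zero_le_one.trans hp))
  rw [H_eq_orbitLaw_Iio μ (n + 1) hx.2, orbitLaw_succ]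
  refine (hasSum_measureReal_map_T_Iio (orbitLaw μ n) (ae_orbitLaw_mem_Ioc μ n) hx).congr_fun
    fun m ↦ ?_
  have : (0 : ℝ) ≤ m := m.cast_nonneg
  rw [hH, hH, hH, hH] <;> linarith [hx.1, hx.2]

/-- Gauss–Kuzmin-type equation: for every `n ≥ 1` and every `x ∈ [0,1]`,
`H_{n+1}(x) = Σ_{(i,ε)} ε (H_n(1/i) - H_n(1/(i+εx)))`, the sum running over odd positive `i`
and `ε = ±1` with `i + ε > 1` (so `ε = 1` gives `i = 2m+1`, `ε = -1` gives `i = 2m+3`, `m ∈ ℕ`). -/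
theorem ocf_gauss_kuzmin_equation (μ : Measure ℝ) [IsProbabilityMeasure μ] [NullSingletonClass μ]
    (hμ : μ (Set.Icc (0 : ℝ) 1)ᶜ = 0)
    (n : ℕ) (hn : 1 ≤ n) (x : ℝ) (hx : x ∈ Set.Icc (0 : ℝ) 1) :
    H μ (n + 1) x = ∑' m : ℕ,
      ((H μ n (1 / (2 * (m : ℝ) + 1)) - H μ n (1 / (2 * (m : ℝ) + 1 + x)))
        - (H μ n (1 / (2 * (m : ℝ) + 3)) - H μ n (1 / (2 * (m : ℝ) + 3 - x)))) :=
  (ocf_gauss_kuzmin_equation_general μ n hx).tsum_eq.symm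
end
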